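/- arXiv:1612.07915 — 2 statements merged into one kernel-verified Lean document; each statement's English description precedes it below -/
import Mathlib

section
/- For a nonempty polytope P in ℝ^d, the function φ_P(x) = Σ_{F face of P} (-1)^{dim F} · 1_{F - N(P,F)}(x) is identically equal to 1, where N(P,F) is the normal cone of P at the face F and F - N(P,F) = {f - u : f ∈ F, u ∈ N(P,F)}. -/
open RealInnerProductSpace Pointwise

noncomputable section

abbrev Euc (d : ℕ) := EuclideanSpace ℝ (Fin d)

/-- A polyhedral set: intersection of finitely many closed half-spaces. -/
def IsPolyhedral {d : ℕ} (P : Set (Euc d)) : Prop :=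
  ∃ s : Finset (Euc d × ℝ), P = {x | ∀ h ∈ s, ⟪h.1, x⟫ ≤ h.2}

/-- A (nonempty) face of a convex set: a nonempty convex extreme subset. -/
def IsFaceOf {d : ℕ} (P F : Set (Euc d)) : Prop :=
  F.Nonempty ∧ Convex ℝ F ∧ IsExtreme ℝ P F

/-- The normal cone of `P` at the face `F`. -/
def normalCone {d : ℕ} (P F : Set (Euc d)) : Set (Euc d) :=
  {u | ∀ f ∈ F, ∀ z ∈ P, ⟪u, z - f⟫ ≤ 0}

/-- The dimension of a set: the rank of the direction of its affine hull. -/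
def sdim {d : ℕ} (F : Set (Euc d)) : ℕ :=
  Module.finrank ℝ (affineSpan ℝ F).direction

/-- φ_P(x) = Σ_{F face of P} (-1)^{dim F} 1_{F - N(P,F)}(x). -/
def phi {d : ℕ} (P : Set (Euc d)) (x : Euc d) : ℤ :=
  ∑ᶠ F ∈ {F : Set (Euc d) | IsFaceOf P F},
    (-1 : ℤ) ^ sdim F * (F - normalCone P F).indicator (fun _ => (1 : ℤ)) x

/-- A set is line-free if it contains no affine line. -/
def LineFree {d : ℕ} (P : Set (Euc d)) : Prop :=
  ∀ x y : Euc d, y ≠ 0 → ∃ t : ℝ, x + t • y ∉ P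

/-!
`φ` is a valuation: `φ_{Q ∩ {g ≤ 0}} + φ_{Q ∩ {g ≥ 0}} = φ_Q + φ_{Q ∩ {g = 0}}` for a polyhedron `Q`
and an affine functional `g`. Let `P` be cut out of an affine subspace by inequalities `g i ≤ 0`.
Removing one of them from `P` to get `Q`, the right-hand side for `g = g i` is constant in `x` by
induction on the number of inequalities, so flipping the sign of `g i` replaces `φ_P` by a constant
minus `φ_P`. If the `g i` are dependent, suitable signs force the polyhedron into a hyperplane
`g i = 0`, and the induction applies again. If they are independent, `P` is a cone with apex space
`L = {g i = 0 for all i}` and `φ_P = 0`: with `z` the projection of `x` to `L`, either `x - z` is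
orthogonal to the whole affine subspace and every face contributes its sign, or suitable signs of
the `g i` put `x - z` into the polar cone and no face contributes. Hence `φ_P` is constant for every
polyhedron.

For a polytope, let `v ∈ P` have maximal norm. At `x = -2 v` only the face `{v}` contributes, since
`⟪z - x, z - v⟫ < 0` for all other `z ∈ P`.
-/

open Filter Topology

section MinFace

variable {E : Type*} [AddCommGroup E] [Module ℝ E] {P Q F : Set E} {w y z : E}

/-- The smallest face of a convex set `P` containing `z ∈ P`: the points of `P` from which one can
move to `z` and a little further without leaving `P`. The parameter of the prolonged segment is
quantified by a filter so that the notion commutes with intersections. -/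
def minFace (P : Set E) (z : E) : Set E :=
  {y ∈ P | ∀ᶠ ε in 𝓝[>] (0 : ℝ), AffineMap.lineMap z y (-ε) ∈ P}

lemma minFace_subset : minFace P z ⊆ P := Set.sep_subset _ _

lemma mem_minFace_self (hz : z ∈ P) : z ∈ minFace P z :=
  ⟨hz, .of_forall fun _ => by simpa using hz⟩

lemma minFace_inter : minFace (P ∩ Q) z = minFace P z ∩ minFace Q z := by
  ext y
  simp only [minFace, Set.mem_inter_iff, Set.mem_ofPred_eq, eventually_and]
  tauto

lemma convex_minFace (hP : Convex ℝ P) : Convex ℝ (minFace P z) := by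
  intro y₁ h₁ y₂ h₂ a b ha hb hab
  refine ⟨hP h₁.1 h₂.1 ha hb hab, ?_⟩
  filter_upwards [h₁.2, h₂.2] with ε hε₁ hε₂
  convert hP hε₁ hε₂ ha hb hab using 1
  obtain rfl : a = 1 - b := by linarith
  simp only [AffineMap.lineMap_apply_module]
  module

lemma mem_minFace_iff_exists_mem_openSegment (hP : Convex ℝ P) :
    y ∈ minFace P z ↔ y ∈ P ∧ ∃ w ∈ P, z ∈ openSegment ℝ y w := by
  refine and_congr_right fun hy => ⟨fun h => ?_, ?_⟩
  · obtain ⟨ε, hεP, hε⟩ := (h.and self_mem_nhdsWithin).exists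
    replace hε : 0 < ε := hε
    refine ⟨_, hεP, ε / (1 + ε), 1 / (1 + ε), by positivity, by positivity, by field_simp; ring, ?_⟩
    rw [AffineMap.lineMap_apply_module]
    match_scalars <;> field_simp <;> ring
  · rintro ⟨w, hw, a, b, ha, hb, hab, rfl⟩
    filter_upwards [Ioo_mem_nhdsGT (show (0 : ℝ) < a / b by positivity)] with ε ⟨hε, hεab⟩
    rw [lt_div_iff₀ hb] at hεab
    have hz := hP hy hw ha.le hb.le hab
    convert hP.lineMap_mem hz hw ⟨show 0 ≤ ε * b / a by positivity, (div_le_one ha).2 hεab.le⟩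
      using 1
    obtain rfl : a = 1 - b := by linarith
    simp only [AffineMap.lineMap_apply_module]
    match_scalars <;> field_simp <;> ring

lemma isExtreme_minFace (hP : Convex ℝ P) : IsExtreme ℝ P (minFace P z) where
  subset := minFace_subset
  left_mem_of_mem_openSegment := by
    rintro x₁ hx₁ x₂ hx₂ y hy ⟨c, e, hc, he, hce, rfl⟩
    obtain ⟨-, w, hw, a, b, ha, hb, hab, rfl⟩ := (mem_minFace_iff_exists_mem_openSegment hP).1 hy
    have hsum : 0 < a * e + b := by positivity
    refine (mem_minFace_iff_exists_mem_openSegment hP).2 ⟨hx₁,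
      (a * e / (a * e + b)) • x₂ + (b / (a * e + b)) • w,
      hP hx₂ hw (by positivity) (by positivity) (by field_simp),
      a * c, a * e + b, by positivity, hsum, by linear_combination a * hce + hab, ?_⟩
    match_scalars <;> field_simp

lemma minFace_subset_of_isExtreme (hP : Convex ℝ P) (hF : IsExtreme ℝ P F) (hz : z ∈ F) :
    minFace P z ⊆ F := by
  intro y hy
  obtain ⟨hyP, w, hw, hzw⟩ := (mem_minFace_iff_exists_mem_openSegment hP).1 hy
  exact hF.left_mem_of_mem_openSegment hyP hw hz hzw

lemma minFace_eq_of_mem (hP : Convex ℝ P) (hz : z ∈ minFace P w) (hw : w ∈ minFace P z) :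
    minFace P w = minFace P z :=
  (minFace_subset_of_isExtreme hP (isExtreme_minFace hP) hw).antisymm
    (minFace_subset_of_isExtreme hP (isExtreme_minFace hP) hz)

lemma minFace_eq_of_mem_openSegment (hP : Convex ℝ P) (hy : y ∈ minFace P z)
    (hw : w ∈ openSegment ℝ z y) : minFace P w = minFace P z := by
  have hz : z ∈ P := by
    obtain ⟨hyP, v, hv, h⟩ := (mem_minFace_iff_exists_mem_openSegment hP).1 hy
    exact hP.openSegment_subset hyP hv h
  exact minFace_eq_of_mem hP ((mem_minFace_iff_exists_mem_openSegment hP).2 ⟨hz, y, hy.1, hw⟩)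
    ((convex_minFace hP).openSegment_subset (mem_minFace_self hz) hy hw)

lemma minFace_affineSubspace (A : AffineSubspace ℝ E) (hz : z ∈ A) : minFace (A : Set E) z = A :=
  minFace_subset.antisymm fun _ hy =>
    ⟨hy, .of_forall fun _ => AffineMap.lineMap_mem _ hz hy⟩

lemma exists_minFace_eq {E : Type*} [NormedAddCommGroup E] [NormedSpace ℝ E]
    [FiniteDimensional ℝ E] {P F : Set E} (hP : Convex ℝ P) (hF : Convex ℝ F)
    (hne : F.Nonempty) (hext : IsExtreme ℝ P F) : ∃ z ∈ F, minFace P z = F := by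
  obtain ⟨z, hz⟩ := hne.intrinsicInterior hF
  have hzF := intrinsicInterior_subset hz
  refine ⟨z, hzF, (minFace_subset_of_isExtreme hP hext hzF).antisymm fun y hy =>
    ⟨hext.subset hy, ?_⟩⟩
  obtain ⟨⟨z, hzA⟩, hzint, rfl⟩ := mem_intrinsicInterior.1 hz
  let line : ℝ → affineSpan ℝ F := fun ε => ⟨AffineMap.lineMap z y (-ε),
    AffineMap.lineMap_mem _ hzA (subset_affineSpan ℝ F hy)⟩
  have hline : Tendsto line (𝓝[>] 0) (𝓝 ⟨z, hzA⟩) := by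
    refine tendsto_nhdsWithin_of_tendsto_nhds (Continuous.tendsto' ?_ _ _ (by simp [line]))
    exact (AffineMap.lineMap_continuous.comp continuous_neg).subtype_mk _
  filter_upwards [hline.eventually (mem_interior_iff_mem_nhds.1 hzint)] with ε hε
  exact hext.subset hε

end MinFace

section Halfspace

variable {E : Type*} [AddCommGroup E] [Module ℝ E] {g : E →ᵃ[ℝ] ℝ} {F : Set E} {n p q z : E}

/-- The closed half-space `g ≤ 0` of an affine functional `g` (everything or nothing when `g` is
constant). -/
def halfspace (g : E →ᵃ[ℝ] ℝ) : Set E := {z | g z ≤ 0}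

/-- The hyperplane `g = 0` of an affine functional `g` (everything or nothing when `g` is
constant). -/
def hyperplane (g : E →ᵃ[ℝ] ℝ) : AffineSubspace ℝ E := (affineSpan ℝ {0}).comap g

@[simp] lemma mem_halfspace : z ∈ halfspace g ↔ g z ≤ 0 := Iff.rfl

@[simp] lemma mem_hyperplane : z ∈ hyperplane g ↔ g z = 0 := by
  rw [hyperplane, AffineSubspace.mem_comap, AffineSubspace.mem_affineSpan_singleton]

lemma convex_halfspace (g : E →ᵃ[ℝ] ℝ) : Convex ℝ (halfspace g) :=
  (convex_Iic (0 : ℝ)).affine_preimage g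

@[simp] lemma hyperplane_neg (g : E →ᵃ[ℝ] ℝ) : hyperplane (-g) = hyperplane g := by
  ext; simp

lemma halfspace_union_halfspace_neg (g : E →ᵃ[ℝ] ℝ) : halfspace g ∪ halfspace (-g) = Set.univ := by
  ext z; simpa using le_total (g z) 0

lemma halfspace_inter_halfspace_neg (g : E →ᵃ[ℝ] ℝ) :
    halfspace g ∩ halfspace (-g) = hyperplane g := by
  ext z; simp [le_antisymm_iff]

lemma eventually_lineMap_neg (hz : g z < 0) (y : E) :
    ∀ᶠ t in 𝓝 (0 : ℝ), g (AffineMap.lineMap z y t) < 0 := by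
  simp only [AffineMap.apply_lineMap]
  exact (AffineMap.lineMap_continuous.tendsto' 0 (g z) (by simp)).eventually_lt_const hz

lemma exists_lineMap_neg (hz : g z < 0) (y : E) :
    ∃ t ∈ Set.Ioo (0 : ℝ) 1, g (AffineMap.lineMap z y t) < 0 :=
  ((eventually_nhdsWithin_of_eventually_nhds (eventually_lineMap_neg hz y)).and
    (Ioo_mem_nhdsGT one_pos)).exists.imp fun _ h => h.symm

lemma exists_mem_openSegment_eq_zero (hn : g n < 0) (hp : 0 < g p) :
    ∃ q ∈ openSegment ℝ n p, g q = 0 := by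
  have h : (0 : ℝ) ∈ g '' openSegment ℝ n p := by
    rw [image_openSegment, openSegment_eq_Ioo (hn.trans hp)]
    exact ⟨hn, hp⟩
  exact h

lemma right_mem_of_mem_openSegment {A : AffineSubspace ℝ E} (hn : n ∈ A) (hq : q ∈ A)
    (h : q ∈ openSegment ℝ n p) : p ∈ A := by
  rw [openSegment_eq_image_lineMap] at h
  obtain ⟨t, ⟨ht, -⟩, rfl⟩ := h
  simpa [ht.ne'] using AffineMap.lineMap_mem t⁻¹ hn hq

lemma minFace_halfspace_of_neg (hz : g z < 0) : minFace (halfspace g) z = halfspace g := by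
  refine minFace_subset.antisymm fun y hy => ⟨hy, ?_⟩
  have h : Tendsto (fun ε : ℝ => -ε) (𝓝[>] 0) (𝓝 0) :=
    tendsto_nhdsWithin_of_tendsto_nhds (by simpa using (continuous_neg (G := ℝ)).tendsto 0)
  exact (h.eventually (eventually_lineMap_neg hz y)).mono fun _ => le_of_lt

lemma apply_lineMap_of_left_eq_zero (hz : g z = 0) (y : E) (t : ℝ) :
    g (AffineMap.lineMap z y t) = t * g y := by
  rw [AffineMap.apply_lineMap, hz, AffineMap.lineMap_apply_module', sub_zero, add_zero, smul_eq_mul]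

lemma minFace_halfspace_of_eq_zero (hz : g z = 0) : minFace (halfspace g) z = hyperplane g := by
  refine Set.Subset.antisymm (fun y ⟨hy, h⟩ => ?_) fun y hy => ?_
  · obtain ⟨ε, hεg, hε⟩ := (h.and self_mem_nhdsWithin).exists
    rw [mem_halfspace, apply_lineMap_of_left_eq_zero hz, neg_mul, Left.neg_nonpos_iff] at hεg
    exact mem_hyperplane.2 (hy.antisymm (nonneg_of_mul_nonneg_right hεg hε))
  · have hgy : g y = 0 := mem_hyperplane.1 hy
    refine ⟨hgy.le, .of_forall fun ε => ?_⟩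
    rw [mem_halfspace, apply_lineMap_of_left_eq_zero hz, hgy, mul_zero]

lemma affineSpan_inter_halfspace (hF : Convex ℝ F) (hz : z ∈ F) (hgz : g z < 0) :
    affineSpan ℝ (F ∩ halfspace g) = affineSpan ℝ F := by
  refine (affineSpan_mono ℝ Set.inter_subset_left).antisymm (affineSpan_le.2 fun y hy => ?_)
  obtain ⟨t, ht, hgt⟩ := exists_lineMap_neg hgz y
  exact right_mem_of_mem_openSegment (subset_affineSpan ℝ _ ⟨hz, hgz.le⟩)
    (subset_affineSpan ℝ _ ⟨hF.lineMap_mem hz hy (Set.Ioo_subset_Icc_self ht), hgt.le⟩)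
    (lineMap_mem_openSegment _ _ _ ht)

lemma affineSpan_insert_inter_hyperplane (hF : Convex ℝ F) (hn : n ∈ F) (hgn : g n < 0)
    (hp : p ∈ F) (hgp : 0 < g p) :
    affineSpan ℝ (insert n (F ∩ hyperplane g)) = affineSpan ℝ F := by
  refine (affineSpan_mono ℝ (Set.insert_subset hn Set.inter_subset_left)).antisymm ?_
  set A := affineSpan ℝ (insert n (F ∩ hyperplane g))
  have crossing {a b} (ha : a ∈ F) (hga : g a < 0) (hb : b ∈ F) (hgb : 0 < g b) :
      ∃ q ∈ A, q ∈ openSegment ℝ a b := by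
    obtain ⟨q, hq, hgq⟩ := exists_mem_openSegment_eq_zero hga hgb
    exact ⟨q, subset_affineSpan ℝ _ (.inr ⟨hF.openSegment_subset ha hb hq, mem_hyperplane.2 hgq⟩),
      hq⟩
  have hpos {y} (hy : y ∈ F) (hgy : 0 < g y) : y ∈ A := by
    obtain ⟨q, hqA, hq⟩ := crossing hn hgn hy hgy
    exact right_mem_of_mem_openSegment (subset_affineSpan ℝ _ (Set.mem_insert n _)) hqA hq
  refine affineSpan_le.2 fun y hy => ?_
  rcases lt_trichotomy (g y) 0 with hgy | hgy | hgy
  · obtain ⟨q, hqA, hq⟩ := crossing hy hgy hp hgp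
    exact right_mem_of_mem_openSegment (hpos hp hgp) hqA (openSegment_symm ℝ y p ▸ hq)
  · exact subset_affineSpan ℝ _ (.inr ⟨hy, mem_hyperplane.2 hgy⟩)
  · exact hpos hy hgy

end Halfspace

section Dimension

variable {d : ℕ} {F : Set (Euc d)} {g : Euc d →ᵃ[ℝ] ℝ} {n p z : Euc d}

lemma sdim_inter_halfspace (hF : Convex ℝ F) (hz : z ∈ F) (hgz : g z < 0) :
    sdim (F ∩ halfspace g) = sdim F := by
  rw [sdim, affineSpan_inter_halfspace hF hz hgz, sdim]

lemma sdim_eq_sdim_inter_hyperplane_add_one (hF : Convex ℝ F) (hn : n ∈ F) (hgn : g n < 0)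
    (hp : p ∈ F) (hgp : 0 < g p) : sdim F = sdim (F ∩ hyperplane g) + 1 := by
  obtain ⟨q, hq, hgq⟩ := exists_mem_openSegment_eq_zero hgn hgp
  have hqA : q ∈ affineSpan ℝ (F ∩ hyperplane g) :=
    subset_affineSpan ℝ _ ⟨hF.openSegment_subset hn hp hq, mem_hyperplane.2 hgq⟩
  have hnA : n ∉ affineSpan ℝ (F ∩ hyperplane g) := fun h =>
    hgn.ne (mem_hyperplane.1 (affineSpan_le.2 Set.inter_subset_right h))
  rw [sdim, ← affineSpan_insert_inter_hyperplane hF hn hgn hp hgp,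
    ← affineSpan_insert_affineSpan, AffineSubspace.direction_affineSpan_insert hqA, sup_comm,
    Submodule.finrank_sup_span_singleton
      (mt (AffineSubspace.vsub_right_mem_direction_iff_mem hqA n).1 hnA), sdim]

end Dimension

section NormalCone

variable {d : ℕ} {P Q F : Set (Euc d)} {g : Euc d →ᵃ[ℝ] ℝ} {u z : Euc d}

lemma mem_normalCone_singleton : u ∈ normalCone P {z} ↔ ∀ y ∈ P, ⟪u, y - z⟫ ≤ 0 := by
  simp [normalCone]

lemma normalCone_anti_left (h : P ⊆ Q) : normalCone Q F ⊆ normalCone P F :=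
  fun _ hu f hf z hz => hu f hf z (h hz)

lemma normalCone_union_left : normalCone (P ∪ Q) F = normalCone P F ∩ normalCone Q F := by
  ext u
  simp only [normalCone, Set.mem_union, or_imp, forall_and, Set.mem_inter_iff, Set.mem_ofPred_eq]

lemma normalCone_eq_normalCone_singleton (hz : z ∈ F) (hF : F ⊆ minFace P z) :
    normalCone P F = normalCone P {z} := by
  refine Set.Subset.antisymm (fun u hu => mem_normalCone_singleton.2 (hu z hz)) ?_
  intro u hu f hf y hy
  rw [mem_normalCone_singleton] at hu
  obtain ⟨ε, hεP, hε⟩ := ((hF hf).2.and self_mem_nhdsWithin).exists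
  have hzf := hu _ hεP
  rw [AffineMap.lineMap_apply_module', add_sub_cancel_right, inner_smul_right, neg_mul,
    Left.neg_nonpos_iff] at hzf
  have hinner : ⟪u, y - f⟫ = ⟪u, y - z⟫ - ⟪u, f - z⟫ := by
    rw [← inner_sub_right, sub_sub_sub_cancel_right]
  linarith [hu y hy, nonneg_of_mul_nonneg_right hzf hε]

lemma normalCone_inter_halfspace_singleton (hP : Convex ℝ P) (hz : z ∈ P) (hgz : g z < 0) :
    normalCone (P ∩ halfspace g) {z} = normalCone P {z} := by
  refine Set.Subset.antisymm (fun u hu => ?_) (normalCone_anti_left Set.inter_subset_left)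
  rw [mem_normalCone_singleton] at hu ⊢
  intro y hy
  obtain ⟨t, ht, hgt⟩ := exists_lineMap_neg hgz y
  have hty := hu _ ⟨hP.lineMap_mem hz hy (Set.Ioo_subset_Icc_self ht), hgt.le⟩
  rw [AffineMap.lineMap_apply_module', add_sub_cancel_right, inner_smul_right] at hty
  exact nonpos_of_mul_nonpos_right hty ht.1

lemma normalCone_inter_hyperplane_singleton (hP : Convex ℝ P) (g : Euc d →ᵃ[ℝ] ℝ) (z : Euc d) :
    normalCone (P ∩ hyperplane g) {z} =
      normalCone (P ∩ halfspace g) {z} ∪ normalCone (P ∩ halfspace (-g)) {z} := by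
  refine Set.Subset.antisymm (fun u hu => ?_) ?_
  · by_contra! h
    simp only [Set.mem_union, mem_normalCone_singleton, not_or, not_forall, not_le] at h hu
    obtain ⟨⟨n, ⟨hn, hgn⟩, hun⟩, p, ⟨hp, hgp⟩, hup⟩ := h
    have hg_ne {y : Euc d} (hy : y ∈ P) (huy : 0 < ⟪u, y - z⟫) : g y ≠ 0 := fun hgy =>
      (hu y ⟨hy, mem_hyperplane.2 hgy⟩).not_gt huy
    obtain ⟨q, hq, hgq⟩ := exists_mem_openSegment_eq_zero (lt_of_le_of_ne hgn (hg_ne hn hun))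
      (lt_of_le_of_ne (by simpa using hgp) (hg_ne hp hup).symm)
    refine hg_ne (hP.openSegment_subset hn hp hq) ?_ hgq
    obtain ⟨a, b, ha, hb, hab, rfl⟩ := hq
    have hsplit : a • n + b • p - z = a • (n - z) + b • (p - z) := by
      rw [smul_sub, smul_sub, ← add_sub_add_comm, Convex.combo_self hab]
    rw [hsplit, inner_add_right, inner_smul_right, inner_smul_right]
    positivity
  · rw [← halfspace_inter_halfspace_neg]
    exact Set.union_subset
      (normalCone_anti_left (Set.inter_subset_inter_right P Set.inter_subset_left))
      (normalCone_anti_left (Set.inter_subset_inter_right P Set.inter_subset_right))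

end NormalCone

section Contacts

variable {d : ℕ} {P F : Set (Euc d)} {x : Euc d}

/-- The points `f ∈ K` with `f - x ∈ C`: they parametrize the representations `x = f - u` with
`f ∈ K` and `u ∈ C`, so that counting them refines the indicator function of `K - C`. -/
def contacts (K C : Set (Euc d)) (x : Euc d) : Set (Euc d) := K ∩ (fun f => f - x) ⁻¹' C

lemma subsingleton_contacts (hF : F ⊆ P) (x : Euc d) :
    (contacts F (normalCone P F) x).Subsingleton := by
  rintro f ⟨hf, hfx⟩ f' ⟨hf', hfx'⟩
  have h₁ := hfx f hf f' (hF hf')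
  have h₂ := hfx' f' hf' f (hF hf)
  have h₃ := hfx f' hf' f (hF hf)
  have h₄ := hfx' f hf f' (hF hf')
  have hnorm : ⟪f - f', f - f'⟫ = ⟪f - x, f - f'⟫ - ⟪f' - x, f - f'⟫ := by
    rw [← inner_sub_left, sub_sub_sub_cancel_right]
  rw [← neg_sub f f', inner_neg_right] at h₁ h₄
  exact sub_eq_zero.1 (real_inner_self_nonpos.1 (by linarith))

lemma indicator_sub_normalCone (hF : F ⊆ P) (x : Euc d) :
    (F - normalCone P F).indicator (fun _ => (1 : ℤ)) x =
      (contacts F (normalCone P F) x).ncard := by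
  have hmem : x ∈ F - normalCone P F ↔ (contacts F (normalCone P F) x).Nonempty := by
    rw [Set.mem_sub]
    constructor
    · rintro ⟨f, hf, u, hu, rfl⟩
      exact ⟨f, hf, show f - (f - u) ∈ _ by rwa [sub_sub_cancel]⟩
    · rintro ⟨f, hf, hfx⟩
      exact ⟨f, hf, f - x, hfx, sub_sub_cancel f x⟩
  rcases (subsingleton_contacts hF x).eq_empty_or_singleton with h | ⟨f, h⟩
  · rw [Set.indicator_of_notMem (by rw [hmem, h]; exact Set.not_nonempty_empty), h,
      Set.ncard_empty, Nat.cast_zero]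
  · rw [Set.indicator_of_mem (by rw [hmem, h]; exact Set.singleton_nonempty f), h,
      Set.ncard_singleton, Nat.cast_one]

lemma ncard_contacts_halfspace_add (hF : F ⊆ P) (g : Euc d →ᵃ[ℝ] ℝ) (x : Euc d) :
    (contacts (F ∩ halfspace g) (normalCone P F) x).ncard +
        (contacts (F ∩ halfspace (-g)) (normalCone P F) x).ncard =
      (contacts F (normalCone P F) x).ncard +
        (contacts (F ∩ hyperplane g) (normalCone P F) x).ncard := by
  have hfin (H : Set (Euc d)) : (contacts (F ∩ H) (normalCone P F) x).Finite :=
    (subsingleton_contacts hF x).finite.subset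
      (Set.inter_subset_inter_left _ Set.inter_subset_left)
  rw [← Set.ncard_union_add_ncard_inter _ _ (hfin _) (hfin _)]
  simp only [contacts]
  rw [← Set.union_inter_distrib_right, ← Set.inter_union_distrib_left,
    halfspace_union_halfspace_neg, Set.inter_univ, ← Set.inter_inter_distrib_right,
    ← Set.inter_inter_distrib_left, halfspace_inter_halfspace_neg]

lemma ncard_contacts_union_add (K C C' : Set (Euc d)) (h : (contacts K (C ∪ C') x).Finite) :
    (contacts K C x).ncard + (contacts K C' x).ncard =
      (contacts K (C ∪ C') x).ncard + (contacts K (C ∩ C') x).ncard := by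
  simp only [contacts, Set.preimage_union, Set.inter_union_distrib_left] at h ⊢
  rw [Set.preimage_inter, Set.inter_inter_distrib_left,
    Set.ncard_union_add_ncard_inter _ _ (h.subset Set.subset_union_left)
      (h.subset Set.subset_union_right)]

end Contacts

section Faces

variable {d : ℕ} {P F : Set (Euc d)} {g : Euc d →ᵃ[ℝ] ℝ} {z : Euc d}

/-- The set of faces of `P` over which `phi P` is summed. -/
def faces (P : Set (Euc d)) : Set (Set (Euc d)) := {F | IsFaceOf P F}

/-- The contribution of the face `F` to `phi P x`, with the indicator function written as a number
of contacts. -/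
def faceTerm (P F : Set (Euc d)) (x : Euc d) : ℤ :=
  (-1) ^ sdim F * (contacts F (normalCone P F) x).ncard

lemma phi_eq_finsum_faceTerm (P : Set (Euc d)) (x : Euc d) :
    phi P x = ∑ᶠ F ∈ faces P, faceTerm P F x :=
  finsum_mem_congr rfl fun F hF => by rw [faceTerm, indicator_sub_normalCone hF.2.2.subset]

lemma minFace_mem_faces (hP : Convex ℝ P) (hz : z ∈ P) : minFace P z ∈ faces P :=
  ⟨⟨z, mem_minFace_self hz⟩, convex_minFace hP, isExtreme_minFace hP⟩

lemma faces_eq_image_minFace (hP : Convex ℝ P) : faces P = minFace P '' P := by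
  refine Set.Subset.antisymm (fun F hF => ?_) (Set.image_subset_iff.2 fun z => minFace_mem_faces hP)
  obtain ⟨z, hz, rfl⟩ := exists_minFace_eq hP hF.2.1 hF.1 hF.2.2
  exact ⟨z, minFace_subset hz, rfl⟩

/-- The faces of `P` whose relative interior meets the open half-space `g < 0`. -/
def negFaces (P : Set (Euc d)) (g : Euc d →ᵃ[ℝ] ℝ) : Set (Set (Euc d)) :=
  minFace P '' {z ∈ P | g z < 0}

/-- The faces of `P` whose relative interior meets the hyperplane `g = 0`. -/
def zeroFaces (P : Set (Euc d)) (g : Euc d →ᵃ[ℝ] ℝ) : Set (Set (Euc d)) :=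
  minFace P '' (P ∩ hyperplane g)

lemma negFaces_subset_faces (hP : Convex ℝ P) : negFaces P g ⊆ faces P :=
  faces_eq_image_minFace hP ▸ Set.image_mono (Set.sep_subset _ _)

lemma zeroFaces_subset_faces (hP : Convex ℝ P) : zeroFaces P g ⊆ faces P :=
  faces_eq_image_minFace hP ▸ Set.image_mono Set.inter_subset_left

lemma mem_negFaces_iff (hP : Convex ℝ P) (hF : F ∈ faces P) :
    F ∈ negFaces P g ↔ ∃ y ∈ F, g y < 0 := by
  constructor
  · rintro ⟨z, ⟨hz, hgz⟩, rfl⟩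
    exact ⟨z, mem_minFace_self hz, hgz⟩
  · rintro ⟨y, hy, hgy⟩
    obtain ⟨z, hz, rfl⟩ := exists_minFace_eq hP hF.2.1 hF.1 hF.2.2
    obtain ⟨t, ht, hgt⟩ := exists_lineMap_neg hgy z
    have hseg : AffineMap.lineMap y z t ∈ openSegment ℝ z y :=
      openSegment_symm ℝ y z ▸ lineMap_mem_openSegment _ _ _ ht
    exact ⟨_, ⟨hP.openSegment_subset (minFace_subset hz) (minFace_subset hy) hseg, hgt⟩,
      minFace_eq_of_mem_openSegment hP hy hseg⟩

lemma exists_pos_mem_minFace (hP : Convex ℝ P) (hgz : g z = 0) {y : Euc d}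
    (hy : y ∈ minFace P z) (hgy : g y < 0) : ∃ w ∈ minFace P z, 0 < g w := by
  obtain ⟨hyP, w, hw, hzw⟩ := (mem_minFace_iff_exists_mem_openSegment hP).1 hy
  refine ⟨w, (mem_minFace_iff_exists_mem_openSegment hP).2
    ⟨hw, y, hyP, openSegment_symm ℝ y w ▸ hzw⟩, ?_⟩
  obtain ⟨a, b, ha, hb, hab, rfl⟩ := hzw
  rw [Convex.combo_affine_apply hab, smul_eq_mul, smul_eq_mul] at hgz
  exact (pos_iff_pos_of_mul_pos (by linarith [mul_neg_of_pos_of_neg ha hgy])).1 hb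

lemma mem_zeroFaces_iff (hP : Convex ℝ P) (hF : F ∈ faces P) :
    F ∈ zeroFaces P g ↔ ((∃ y ∈ F, g y < 0) ↔ ∃ y ∈ F, 0 < g y) := by
  constructor
  · rintro ⟨z, ⟨-, hgz⟩, rfl⟩
    rw [SetLike.mem_coe, mem_hyperplane] at hgz
    refine ⟨fun ⟨y, hy, hgy⟩ => exists_pos_mem_minFace hP hgz hy hgy, fun ⟨y, hy, hgy⟩ => ?_⟩
    simpa using exists_pos_mem_minFace (g := -g) hP (by simpa using hgz) hy (by simpa using hgy)
  · intro h
    by_cases hneg : ∃ y ∈ F, g y < 0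
    · obtain ⟨n, ⟨hn, hgn⟩, hnF⟩ := (mem_negFaces_iff hP hF).2 hneg
      obtain ⟨p, ⟨hp, hgp⟩, rfl⟩ := (mem_negFaces_iff (g := -g) hP hF).2 (by simpa using h.1 hneg)
      obtain ⟨q, hq, hgq⟩ := exists_mem_openSegment_eq_zero hgn (by simpa using hgp)
      exact ⟨q, ⟨hP.openSegment_subset hn hp hq, mem_hyperplane.2 hgq⟩, by
        rw [minFace_eq_of_mem_openSegment hP (hnF ▸ mem_minFace_self hp) hq, hnF]⟩
    · obtain ⟨z, hz, rfl⟩ := exists_minFace_eq hP hF.2.1 hF.1 hF.2.2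
      push Not at hneg
      have hpos := mt h.2 (by simpa using hneg)
      push Not at hpos
      exact ⟨z, ⟨minFace_subset hz, mem_hyperplane.2 ((hpos z hz).antisymm (hneg z hz))⟩, rfl⟩

lemma injOn_inter_image_minFace (hP : Convex ℝ P) {S K : Set (Euc d)} (hSP : S ⊆ P) (hSK : S ⊆ K) :
    Set.InjOn (· ∩ K) (minFace P '' S) := by
  rintro _ ⟨z, hz, rfl⟩ _ ⟨w, hw, rfl⟩ (h : minFace P z ∩ K = minFace P w ∩ K)
  have hzw : z ∈ minFace P w ∩ K := h ▸ ⟨mem_minFace_self (hSP hz), hSK hz⟩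
  have hwz : w ∈ minFace P z ∩ K := h ▸ ⟨mem_minFace_self (hSP hw), hSK hw⟩
  exact minFace_eq_of_mem hP hwz.1 hzw.1

lemma injOn_inter_halfspace_negFaces (hP : Convex ℝ P) (g : Euc d →ᵃ[ℝ] ℝ) :
    Set.InjOn (· ∩ halfspace g) (negFaces P g) :=
  injOn_inter_image_minFace hP (Set.sep_subset _ _) fun _ hz => hz.2.le

lemma injOn_inter_hyperplane_zeroFaces (hP : Convex ℝ P) (g : Euc d →ᵃ[ℝ] ℝ) :
    Set.InjOn (· ∩ (hyperplane g : Set (Euc d))) (zeroFaces P g) :=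
  injOn_inter_image_minFace hP Set.inter_subset_left Set.inter_subset_right

lemma minFace_inter_hyperplane (hgz : g z = 0) :
    minFace (P ∩ hyperplane g) z = minFace P z ∩ hyperplane g := by
  rw [minFace_inter, minFace_affineSubspace _ (mem_hyperplane.2 hgz)]

lemma minFace_inter_halfspace_of_eq_zero (hgz : g z = 0) :
    minFace (P ∩ halfspace g) z = minFace P z ∩ hyperplane g := by
  rw [minFace_inter, minFace_halfspace_of_eq_zero hgz]

lemma minFace_inter_halfspace_of_neg (hgz : g z < 0) :
    minFace (P ∩ halfspace g) z = minFace P z ∩ halfspace g := by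
  rw [minFace_inter, minFace_halfspace_of_neg hgz]

lemma faces_inter_hyperplane (hP : Convex ℝ P) (g : Euc d →ᵃ[ℝ] ℝ) :
    faces (P ∩ hyperplane g) = (· ∩ (hyperplane g : Set (Euc d))) '' zeroFaces P g := by
  rw [faces_eq_image_minFace (hP.inter (hyperplane g).convex), zeroFaces, Set.image_image]
  exact Set.image_congr fun z hz => minFace_inter_hyperplane (mem_hyperplane.1 hz.2)

lemma faces_inter_halfspace (hP : Convex ℝ P) (g : Euc d →ᵃ[ℝ] ℝ) :
    faces (P ∩ halfspace g) =
      (· ∩ halfspace g) '' negFaces P g ∪ (· ∩ (hyperplane g : Set (Euc d))) '' zeroFaces P g := by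
  have hsplit : P ∩ halfspace g = {z ∈ P | g z < 0} ∪ P ∩ hyperplane g := by
    ext z
    simp [le_iff_lt_or_eq, and_or_left]
  rw [faces_eq_image_minFace (hP.inter (convex_halfspace g)), negFaces, zeroFaces,
    Set.image_image, Set.image_image]
  nth_rw 2 [hsplit]
  rw [Set.image_union]
  exact congrArg₂ _ (Set.image_congr fun z hz => minFace_inter_halfspace_of_neg hz.2)
    (Set.image_congr fun z hz => minFace_inter_halfspace_of_eq_zero (mem_hyperplane.1 hz.2))

lemma finite_faces_inter_halfspace (hP : Convex ℝ P) (hfin : (faces P).Finite)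
    (g : Euc d →ᵃ[ℝ] ℝ) : (faces (P ∩ halfspace g)).Finite := by
  rw [faces_inter_halfspace hP]
  exact ((hfin.subset (negFaces_subset_faces hP)).image _).union
    ((hfin.subset (zeroFaces_subset_faces hP)).image _)

lemma phi_inter_hyperplane (hP : Convex ℝ P) (g : Euc d →ᵃ[ℝ] ℝ) (x : Euc d) :
    phi (P ∩ hyperplane g) x =
      ∑ᶠ F ∈ zeroFaces P g, faceTerm (P ∩ hyperplane g) (F ∩ hyperplane g) x := by
  rw [phi_eq_finsum_faceTerm, faces_inter_hyperplane hP,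
    finsum_mem_image (injOn_inter_hyperplane_zeroFaces hP g)]

lemma phi_inter_halfspace (hP : Convex ℝ P) (hfin : (faces P).Finite) (g : Euc d →ᵃ[ℝ] ℝ)
    (x : Euc d) :
    phi (P ∩ halfspace g) x =
      (∑ᶠ F ∈ negFaces P g, faceTerm (P ∩ halfspace g) (F ∩ halfspace g) x) +
        ∑ᶠ F ∈ zeroFaces P g, faceTerm (P ∩ halfspace g) (F ∩ hyperplane g) x := by
  have hdisj : Disjoint ((· ∩ halfspace g) '' negFaces P g)
      ((· ∩ (hyperplane g : Set (Euc d))) '' zeroFaces P g) := by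
    rw [Set.disjoint_left]
    rintro _ ⟨_, ⟨z, ⟨hz, hgz⟩, rfl⟩, rfl⟩ ⟨F, -, hF : F ∩ hyperplane g = _⟩
    have hzF : z ∈ F ∩ hyperplane g := hF ▸ ⟨mem_minFace_self hz, hgz.le⟩
    exact hgz.ne (mem_hyperplane.1 hzF.2)
  rw [phi_eq_finsum_faceTerm, faces_inter_halfspace hP, finsum_mem_union hdisj
      ((hfin.subset (negFaces_subset_faces hP)).image _)
      ((hfin.subset (zeroFaces_subset_faces hP)).image _),
    finsum_mem_image (injOn_inter_halfspace_negFaces hP g),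
    finsum_mem_image (injOn_inter_hyperplane_zeroFaces hP g)]

end Faces

section Valuation

variable {d : ℕ} {P F : Set (Euc d)} {g : Euc d →ᵃ[ℝ] ℝ}

lemma faceTerm_inter_halfspace (hP : Convex ℝ P) (hF : F ∈ negFaces P g) (x : Euc d) :
    faceTerm (P ∩ halfspace g) (F ∩ halfspace g) x =
      (-1) ^ sdim F * (contacts (F ∩ halfspace g) (normalCone P F) x).ncard := by
  obtain ⟨z, ⟨hz, hgz⟩, rfl⟩ := hF
  have hzF : z ∈ minFace P z := mem_minFace_self hz
  have hzG : z ∈ minFace P z ∩ halfspace g := ⟨hzF, hgz.le⟩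
  have hcone : normalCone (P ∩ halfspace g) (minFace P z ∩ halfspace g) =
      normalCone P (minFace P z) := by
    rw [normalCone_eq_normalCone_singleton hzG (minFace_inter_halfspace_of_neg hgz).ge,
      normalCone_inter_halfspace_singleton hP hz hgz,
      normalCone_eq_normalCone_singleton hzF subset_rfl]
  rw [faceTerm, hcone, sdim_inter_halfspace (convex_minFace hP) hzF hgz]

lemma faceTerm_inter_hyperplane_add (hP : Convex ℝ P) (hF : F ∈ zeroFaces P g) (x : Euc d) :
    faceTerm (P ∩ halfspace g) (F ∩ hyperplane g) x +
        faceTerm (P ∩ halfspace (-g)) (F ∩ hyperplane g) x =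
      faceTerm (P ∩ hyperplane g) (F ∩ hyperplane g) x +
        (-1) ^ sdim (F ∩ hyperplane g) *
          (contacts (F ∩ hyperplane g) (normalCone P F) x).ncard := by
  obtain ⟨z, ⟨hz, hgz⟩, rfl⟩ := hF
  have hzF : z ∈ minFace P z := mem_minFace_self hz
  have hzH : z ∈ minFace P z ∩ hyperplane g := ⟨hzF, hgz⟩
  rw [SetLike.mem_coe, mem_hyperplane] at hgz
  have hneg : normalCone (P ∩ halfspace g) (minFace P z ∩ hyperplane g) =
      normalCone (P ∩ halfspace g) {z} :=
    normalCone_eq_normalCone_singleton hzH (minFace_inter_halfspace_of_eq_zero hgz).ge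
  have hpos : normalCone (P ∩ halfspace (-g)) (minFace P z ∩ hyperplane g) =
      normalCone (P ∩ halfspace (-g)) {z} := by
    refine normalCone_eq_normalCone_singleton hzH (Eq.ge ?_)
    rw [minFace_inter_halfspace_of_eq_zero (by simpa using hgz), hyperplane_neg]
  have hzero : normalCone (P ∩ hyperplane g) (minFace P z ∩ hyperplane g) =
      normalCone (P ∩ halfspace g) {z} ∪ normalCone (P ∩ halfspace (-g)) {z} := by
    rw [normalCone_eq_normalCone_singleton hzH (minFace_inter_hyperplane hgz).ge,
      normalCone_inter_hyperplane_singleton hP]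
  have hall : normalCone P (minFace P z) =
      normalCone (P ∩ halfspace g) {z} ∩ normalCone (P ∩ halfspace (-g)) {z} := by
    rw [← normalCone_union_left, ← Set.inter_union_distrib_left, halfspace_union_halfspace_neg,
      Set.inter_univ, normalCone_eq_normalCone_singleton hzF subset_rfl]
  have hfin : (contacts (minFace P z ∩ hyperplane g)
      (normalCone (P ∩ halfspace g) {z} ∪ normalCone (P ∩ halfspace (-g)) {z}) x).Finite :=
    hzero ▸ (subsingleton_contacts (Set.inter_subset_inter_left _ minFace_subset) x).finite
  rw [faceTerm, faceTerm, faceTerm, hneg, hpos, hzero, hall, ← mul_add, ← mul_add]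
  exact_mod_cast congrArg _ (congrArg _ (ncard_contacts_union_add _ _ _ hfin))

lemma inter_halfspace_eq_left (h : ¬∃ y ∈ F, 0 < g y) : F ∩ halfspace g = F :=
  Set.inter_eq_left.2 fun y hy => not_lt.1 fun hgy => h ⟨y, hy, hgy⟩

lemma indicator_faceTerm_add (hP : Convex ℝ P) (hF : F ∈ faces P) (x : Euc d) :
    ((negFaces P g).indicator (fun F => faceTerm (P ∩ halfspace g) (F ∩ halfspace g) x) F +
        (negFaces P (-g)).indicator
          (fun F => faceTerm (P ∩ halfspace (-g)) (F ∩ halfspace (-g)) x) F) +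
        (zeroFaces P g).indicator (fun F => faceTerm (P ∩ halfspace g) (F ∩ hyperplane g) x +
          faceTerm (P ∩ halfspace (-g)) (F ∩ hyperplane g) x) F =
      faceTerm P F x +
        (zeroFaces P g).indicator
          (fun F => faceTerm (P ∩ hyperplane g) (F ∩ hyperplane g) x) F := by
  have hneg := mem_negFaces_iff (g := g) hP hF
  have hpos : F ∈ negFaces P (-g) ↔ ∃ y ∈ F, 0 < g y := by
    simpa using mem_negFaces_iff (g := -g) hP hF
  have hzero := mem_zeroFaces_iff (g := g) hP hF
  have hterm : faceTerm P F x = (-1) ^ sdim F * (contacts F (normalCone P F) x).ncard := rfl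
  have hcount := ncard_contacts_halfspace_add hF.2.2.subset g x
  zify at hcount
  by_cases hn : ∃ y ∈ F, g y < 0 <;> by_cases hp : ∃ y ∈ F, 0 < g y
  · -- The slice has one dimension less than `F`, so its sign makes up for its being counted twice.
    have hZ := hzero.2 (iff_of_true hn hp)
    rw [Set.indicator_of_mem (hneg.2 hn), Set.indicator_of_mem (hpos.2 hp),
      Set.indicator_of_mem hZ, Set.indicator_of_mem hZ, faceTerm_inter_halfspace hP (hneg.2 hn),
      faceTerm_inter_halfspace hP (hpos.2 hp), faceTerm_inter_hyperplane_add hP hZ, hterm]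
    obtain ⟨⟨n, hnF, hgn⟩, p, hpF, hgp⟩ := And.intro hn hp
    rw [sdim_eq_sdim_inter_hyperplane_add_one hF.2.1 hnF hgn hpF hgp, pow_succ]
    linear_combination (-1) ^ sdim (F ∩ hyperplane g) * -1 * hcount
  · have hZ := mt hzero.1 (by simp [hn, hp])
    rw [Set.indicator_of_mem (hneg.2 hn), Set.indicator_of_notMem (mt hpos.1 hp),
      Set.indicator_of_notMem hZ, Set.indicator_of_notMem hZ,
      faceTerm_inter_halfspace hP (hneg.2 hn), inter_halfspace_eq_left hp, hterm, add_zero,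
      add_zero]
  · have hZ := mt hzero.1 (by simp [hn, hp])
    rw [Set.indicator_of_notMem (mt hneg.1 hn), Set.indicator_of_mem (hpos.2 hp),
      Set.indicator_of_notMem hZ, Set.indicator_of_notMem hZ,
      faceTerm_inter_halfspace hP (hpos.2 hp), inter_halfspace_eq_left (by simpa using hn),
      hterm, zero_add]
  · have hZ := hzero.2 (iff_of_false hn hp)
    have hFg : F ∩ hyperplane g = F := by
      rw [← halfspace_inter_halfspace_neg, ← Set.inter_assoc, inter_halfspace_eq_left hp,
        inter_halfspace_eq_left (by simpa using hn)]
    rw [Set.indicator_of_notMem (mt hneg.1 hn), Set.indicator_of_notMem (mt hpos.1 hp),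
      Set.indicator_of_mem hZ, Set.indicator_of_mem hZ, faceTerm_inter_hyperplane_add hP hZ, hFg,
      zero_add, zero_add, add_comm, hterm]

lemma finsum_mem_eq_finsum_mem_indicator {α M : Type*} [AddCommMonoid M] {s t : Set α}
    (h : s ⊆ t) (f : α → M) : ∑ᶠ i ∈ s, f i = ∑ᶠ i ∈ t, s.indicator f i := by
  rw [finsum_mem_def, finsum_mem_def, Set.indicator_indicator, Set.inter_eq_right.2 h]

theorem phi_inter_halfspace_add (hP : Convex ℝ P) (hfin : (faces P).Finite)
    (g : Euc d →ᵃ[ℝ] ℝ) (x : Euc d) :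
    phi (P ∩ halfspace g) x + phi (P ∩ halfspace (-g)) x =
      phi P x + phi (P ∩ hyperplane g) x := by
  have hzero : zeroFaces P (-g) = zeroFaces P g := by rw [zeroFaces, hyperplane_neg, zeroFaces]
  rw [phi_inter_halfspace hP hfin, phi_inter_halfspace hP hfin, hzero, hyperplane_neg,
    add_add_add_comm, ← finsum_mem_add_distrib (hfin.subset (zeroFaces_subset_faces hP)),
    phi_inter_hyperplane hP, phi_eq_finsum_faceTerm P,
    finsum_mem_eq_finsum_mem_indicator (negFaces_subset_faces hP),
    finsum_mem_eq_finsum_mem_indicator (negFaces_subset_faces hP),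
    finsum_mem_eq_finsum_mem_indicator (zeroFaces_subset_faces hP),
    finsum_mem_eq_finsum_mem_indicator (zeroFaces_subset_faces hP),
    ← finsum_mem_add_distrib hfin, ← finsum_mem_add_distrib hfin, ← finsum_mem_add_distrib hfin]
  exact finsum_mem_congr rfl fun F hF => indicator_faceTerm_add hP hF x

end Valuation

section FaceTerm

variable {d : ℕ} {P F : Set (Euc d)} {f x z : Euc d}

lemma faceTerm_of_mem_contacts (hF : F ⊆ P) (hf : f ∈ contacts F (normalCone P F) x) :
    faceTerm P F x = (-1) ^ sdim F := by
  rw [faceTerm, (subsingleton_contacts hF x).eq_singleton_of_mem hf, Set.ncard_singleton,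
    Nat.cast_one, mul_one]

lemma faceTerm_of_contacts_eq_empty (h : contacts F (normalCone P F) x = ∅) :
    faceTerm P F x = 0 := by
  rw [faceTerm, h, Set.ncard_empty, Nat.cast_zero, mul_zero]

lemma mem_contacts_of_inner_eq_zero (hF : F ⊆ P) (hz : z ∈ F)
    (h : ∀ y ∈ P, ⟪x - z, y - z⟫ = 0) : z ∈ contacts F (normalCone P F) x := by
  refine ⟨hz, fun f hf y hy => Eq.le ?_⟩
  change ⟪z - x, y - f⟫ = 0
  rw [← sub_sub_sub_cancel_right y f z, ← neg_sub x z, inner_neg_left, inner_sub_right, h y hy,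
    h f (hF hf), sub_zero, neg_zero]

lemma phi_empty (x : Euc d) : phi ∅ x = 0 := by
  rw [phi_eq_finsum_faceTerm, faces_eq_image_minFace convex_empty, Set.image_empty,
    finsum_mem_empty]

lemma faces_affineSubspace {A : AffineSubspace ℝ (Euc d)} (hA : (A : Set (Euc d)).Nonempty) :
    faces (A : Set (Euc d)) = {(A : Set (Euc d))} := by
  rw [faces_eq_image_minFace A.convex, ← hA.image_const (A : Set (Euc d))]
  exact Set.image_congr fun z hz => minFace_affineSubspace A hz

lemma exists_mem_forall_inner_sub_eq_zero {E : Type*} [NormedAddCommGroup E]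
    [InnerProductSpace ℝ E] {A : AffineSubspace ℝ E} [A.direction.HasOrthogonalProjection]
    (hA : (A : Set E).Nonempty) (x : E) : ∃ z ∈ A, ∀ y ∈ A, ⟪x - z, y - z⟫ = 0 := by
  have : Nonempty A := hA.to_subtype
  have hz := EuclideanGeometry.orthogonalProjection_mem (s := A) x
  refine ⟨_, hz, fun y hy => ?_⟩
  rw [real_inner_comm]
  exact EuclideanGeometry.vsub_orthogonalProjection_mem_direction_orthogonal A x _
    (AffineSubspace.vsub_mem_direction hy hz)

lemma phi_affineSubspace {A : AffineSubspace ℝ (Euc d)} (hA : (A : Set (Euc d)).Nonempty)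
    (x : Euc d) : phi (A : Set (Euc d)) x = (-1) ^ sdim (A : Set (Euc d)) := by
  obtain ⟨z, hz, horth⟩ := exists_mem_forall_inner_sub_eq_zero hA x
  rw [phi_eq_finsum_faceTerm, faces_affineSubspace hA, finsum_mem_singleton,
    faceTerm_of_mem_contacts subset_rfl (mem_contacts_of_inner_eq_zero subset_rfl hz horth)]

end FaceTerm

section Polyhedron

variable {ι : Type*} {d : ℕ} {A : AffineSubspace ℝ (Euc d)} {s : Finset ι}
  {g : ι → Euc d →ᵃ[ℝ] ℝ} {i : ι}

/-- The polyhedron cut out of an affine subspace `A` by the inequalities `g i ≤ 0`, `i ∈ s`. The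
inequalities are indexed so that their signs can be flipped one at a time. -/
def polyhedron (A : AffineSubspace ℝ (Euc d)) (s : Finset ι) (g : ι → Euc d →ᵃ[ℝ] ℝ) :
    Set (Euc d) :=
  {z | z ∈ A ∧ ∀ i ∈ s, g i z ≤ 0}

lemma polyhedron_empty (A : AffineSubspace ℝ (Euc d)) (g : ι → Euc d →ᵃ[ℝ] ℝ) :
    polyhedron A ∅ g = A := by
  simp [polyhedron]

lemma polyhedron_insert [DecidableEq ι] (A : AffineSubspace ℝ (Euc d)) (s : Finset ι)
    (g : ι → Euc d →ᵃ[ℝ] ℝ) (i : ι) :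
    polyhedron A (insert i s) g = polyhedron A s g ∩ halfspace (g i) := by
  ext z
  simp only [polyhedron, Finset.forall_mem_insert, Set.mem_ofPred_eq, Set.mem_inter_iff,
    mem_halfspace]
  tauto

lemma polyhedron_erase_inter_halfspace [DecidableEq ι] (hi : i ∈ s) :
    polyhedron A (s.erase i) g ∩ halfspace (g i) = polyhedron A s g := by
  rw [← polyhedron_insert, Finset.insert_erase hi]

lemma polyhedron_inf_hyperplane (A : AffineSubspace ℝ (Euc d)) (s : Finset ι)
    (g : ι → Euc d →ᵃ[ℝ] ℝ) (h : Euc d →ᵃ[ℝ] ℝ) :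
    polyhedron (A ⊓ hyperplane h) s g = polyhedron A s g ∩ hyperplane h := by
  ext z
  simp only [polyhedron, AffineSubspace.mem_inf_iff, Set.mem_ofPred_eq, Set.mem_inter_iff,
    SetLike.mem_coe]
  tauto

lemma polyhedron_eq_of_subset_hyperplane [DecidableEq ι] (hi : i ∈ s)
    (h : polyhedron A s g ⊆ hyperplane (g i)) :
    polyhedron A s g = polyhedron (A ⊓ hyperplane (g i)) (s.erase i) g := by
  have hsub : (hyperplane (g i) : Set (Euc d)) ⊆ halfspace (g i) := fun z hz =>
    (mem_hyperplane.1 hz).le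
  rw [polyhedron_inf_hyperplane, ← Set.inter_eq_left.2 h, ← polyhedron_erase_inter_halfspace hi,
    Set.inter_assoc, Set.inter_eq_right.2 hsub]

lemma polyhedron_erase_update [DecidableEq ι] (A : AffineSubspace ℝ (Euc d)) (s : Finset ι)
    (g : ι → Euc d →ᵃ[ℝ] ℝ) (i : ι) (h : Euc d →ᵃ[ℝ] ℝ) :
    polyhedron A (s.erase i) (Function.update g i h) = polyhedron A (s.erase i) g := by
  ext z
  refine and_congr_right fun _ => forall₂_congr fun j hj => ?_
  rw [Function.update_of_ne (Finset.ne_of_mem_erase hj)]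

lemma convex_polyhedron (A : AffineSubspace ℝ (Euc d)) (s : Finset ι) (g : ι → Euc d →ᵃ[ℝ] ℝ) :
    Convex ℝ (polyhedron A s g) := by
  classical
  induction s using Finset.induction_on with
  | empty => exact (polyhedron_empty A g).symm ▸ A.convex
  | insert i s _ ih => exact polyhedron_insert A s g i ▸ ih.inter (convex_halfspace _)

lemma finite_faces_polyhedron (A : AffineSubspace ℝ (Euc d)) (s : Finset ι)
    (g : ι → Euc d →ᵃ[ℝ] ℝ) : (faces (polyhedron A s g)).Finite := by
  classical
  induction s using Finset.induction_on with
  | empty =>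
    rw [polyhedron_empty, faces_eq_image_minFace A.convex]
    exact (Set.finite_singleton (A : Set (Euc d))).subset
      (Set.image_subset_iff.2 fun z hz => minFace_affineSubspace A hz)
  | insert i s _ ih =>
    rw [polyhedron_insert]
    exact finite_faces_inter_halfspace (convex_polyhedron A s g) ih _

lemma phi_polyhedron_add_update_neg [DecidableEq ι] (hi : i ∈ s) (x : Euc d) :
    phi (polyhedron A s g) x + phi (polyhedron A s (Function.update g i (-g i))) x =
      phi (polyhedron A (s.erase i) g) x +
        phi (polyhedron (A ⊓ hyperplane (g i)) (s.erase i) g) x := by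
  rw [← polyhedron_erase_inter_halfspace hi, ← polyhedron_erase_inter_halfspace hi,
    polyhedron_erase_update, Function.update_self, polyhedron_inf_hyperplane]
  exact phi_inter_halfspace_add (convex_polyhedron A _ g) (finite_faces_polyhedron A _ g) (g i) x

lemma piecewise_neg_apply [DecidableEq ι] (t : Finset ι) (g : ι → Euc d →ᵃ[ℝ] ℝ) (i : ι)
    (z : Euc d) : (t.piecewise (-g) g) i z = if i ∈ t then -g i z else g i z := by
  rw [Finset.piecewise]
  split_ifs <;> simp

lemma of_piecewise_neg {M : Type*} [Neg M] [DecidableEq ι] {R : (ι → M) → Prop}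
    (hR : ∀ g, ∀ i ∈ s, R (Function.update g i (-g i)) → R g) {t : Finset ι} (ht : t ⊆ s)
    {g : ι → M} (h : R (t.piecewise (-g) g)) : R g := by
  induction t using Finset.induction_on with
  | empty => rwa [Finset.piecewise_empty] at h
  | insert i t hi ih =>
    refine ih ((Finset.subset_insert i t).trans ht) (hR _ i (ht (Finset.mem_insert_self i t)) ?_)
    rwa [Finset.piecewise_insert, Pi.neg_apply, ← Finset.piecewise_eq_of_notMem t (-g) g hi] at h

end Polyhedron

section Cone

variable {d : ℕ} {P C F : Set (Euc d)} {g : Euc d →ᵃ[ℝ] ℝ} {w x z : Euc d}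

lemma mem_openSegment_lineMap_two {E : Type*} [AddCommGroup E] [Module ℝ E] (z f : E) :
    f ∈ openSegment ℝ z (AffineMap.lineMap z f (2 : ℝ)) := by
  refine ⟨1 / 2, 1 / 2, by norm_num, by norm_num, by norm_num, ?_⟩
  rw [AffineMap.lineMap_apply_module]
  module

lemma mem_of_mem_faces_cone (hz : z ∈ C)
    (hcone : ∀ f ∈ C, AffineMap.lineMap z f (2 : ℝ) ∈ C) (hF : F ∈ faces C) : z ∈ F := by
  obtain ⟨f, hf⟩ := hF.1
  have hfC := hF.2.2.subset hf
  exact hF.2.2.left_mem_of_mem_openSegment hz (hcone f hfC) hf (mem_openSegment_lineMap_two z f)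

lemma phi_cone_eq_zero_of_inner_neg (hz : z ∈ C)
    (hcone : ∀ f ∈ C, AffineMap.lineMap z f (2 : ℝ) ∈ C) (hx : ∀ y ∈ C, ⟪x - z, y - z⟫ ≤ 0)
    (hw : w ∈ C) (hxw : ⟪x - z, w - z⟫ < 0) : phi C x = 0 := by
  rw [phi_eq_finsum_faceTerm]
  refine finsum_mem_eq_zero_of_forall_eq_zero fun F hF =>
    faceTerm_of_contacts_eq_empty (Set.eq_empty_of_forall_notMem ?_)
  rintro f ⟨hf, hfx : f - x ∈ normalCone C F⟩
  have hfC := hF.2.2.subset hf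
  have h₁ := hfx f hf z hz
  have h₂ := hfx f hf _ (hcone f hfC)
  have hdouble : AffineMap.lineMap z f (2 : ℝ) - f = f - z := by
    rw [AffineMap.lineMap_apply_module']
    module
  rw [hdouble] at h₂
  rw [← neg_sub f z, inner_neg_right] at h₁
  have hsplit : ⟪f - z, f - z⟫ = ⟪f - x, f - z⟫ + ⟪x - z, f - z⟫ := by
    rw [← inner_add_left, sub_add_sub_cancel]
  obtain rfl : f = z :=
    sub_eq_zero.1 (real_inner_self_nonpos.1 (by linarith [hx f hfC]))
  have h₃ := hfx f hf w hw
  rw [← neg_sub x f, inner_neg_left] at h₃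
  linarith

lemma phi_inter_halfspace_eq_zero (hP : Convex ℝ P) (hfin : (faces P).Finite)
    (hneg : ∀ F ∈ faces P, ∃ y ∈ F, g y < 0) (hpos : ∀ F ∈ faces P, ∃ y ∈ F, 0 < g y)
    (hterm : ∀ F ∈ faces (P ∩ halfspace g), faceTerm (P ∩ halfspace g) F x = (-1) ^ sdim F) :
    phi (P ∩ halfspace g) x = 0 := by
  have hN : negFaces P g = faces P :=
    (negFaces_subset_faces hP).antisymm fun F hF => (mem_negFaces_iff hP hF).2 (hneg F hF)
  have hZ : zeroFaces P g = faces P :=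
    (zeroFaces_subset_faces hP).antisymm fun F hF =>
      (mem_zeroFaces_iff hP hF).2 (iff_of_true (hneg F hF) (hpos F hF))
  rw [faces_inter_halfspace hP, hN, hZ] at hterm
  rw [phi_inter_halfspace hP hfin, hN, hZ, ← finsum_mem_add_distrib hfin]
  refine finsum_mem_eq_zero_of_forall_eq_zero fun F hF => ?_
  obtain ⟨⟨n, hn, hgn⟩, p, hp, hgp⟩ := And.intro (hneg F hF) (hpos F hF)
  rw [hterm _ (.inl ⟨F, hF, rfl⟩), hterm _ (.inr ⟨F, hF, rfl⟩),
    sdim_inter_halfspace hF.2.1 hn hgn,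
    sdim_eq_sdim_inter_hyperplane_add_one hF.2.1 hn hgn hp hgp, pow_succ, mul_neg_one,
    neg_add_cancel]

end Cone

section SimplicialCone

variable {ι : Type*} {d : ℕ} {A : AffineSubspace ℝ (Euc d)} {s : Finset ι}
  {g : ι → Euc d →ᵃ[ℝ] ℝ} {i : ι} {x z : Euc d}

/-- The functionals `g i`, `i ∈ s`, take arbitrary prescribed values on `A`. Then `polyhedron A s g`
is a simplicial cone, up to a linear factor, in `A`. -/
def JointlySurjective (A : AffineSubspace ℝ (Euc d)) (s : Finset ι)
    (g : ι → Euc d →ᵃ[ℝ] ℝ) : Prop :=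
  ∀ c : ι → ℝ, ∃ z ∈ A, ∀ i ∈ s, g i z = c i

lemma JointlySurjective.mono {t : Finset ι} (h : JointlySurjective A s g) (hts : t ⊆ s) :
    JointlySurjective A t g := fun c =>
  (h c).imp fun _ hz => ⟨hz.1, fun i hi => hz.2 i (hts hi)⟩

lemma JointlySurjective.update_neg [DecidableEq ι] (h : JointlySurjective A s g) (i : ι) :
    JointlySurjective A s (Function.update g i (-g i)) := fun c => by
  obtain ⟨z, hz, hgz⟩ := h (Function.update c i (-c i))
  refine ⟨z, hz, fun j hj => ?_⟩
  rcases eq_or_ne j i with rfl | hji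
  · simpa using congrArg Neg.neg (hgz j hj)
  · simpa [hji] using hgz j hj

lemma JointlySurjective.inf_hyperplane [DecidableEq ι] (h : JointlySurjective A s g)
    (hi : i ∈ s) : JointlySurjective (A ⊓ hyperplane (g i)) (s.erase i) g := fun c => by
  obtain ⟨z, hz, hgz⟩ := h (Function.update c i 0)
  refine ⟨z, ⟨hz, mem_hyperplane.2 (by simpa using hgz i hi)⟩, fun j hj => ?_⟩
  rw [hgz j (Finset.mem_of_mem_erase hj), Function.update_of_ne (Finset.ne_of_mem_erase hj)]

lemma JointlySurjective.exists_mem_minFace_erase [DecidableEq ι] (h : JointlySurjective A s g)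
    (hi : i ∈ s) (hz : z ∈ polyhedron A (s.erase i) g) (c : ℝ) :
    ∃ y ∈ minFace (polyhedron A (s.erase i) g) z, g i y = c := by
  obtain ⟨y, hyA, hy⟩ := h (Function.update (fun j => g j z) i c)
  have hyz : ∀ j ∈ s.erase i, g j y = g j z := fun j hj => by
    rw [hy j (Finset.mem_of_mem_erase hj), Function.update_of_ne (Finset.ne_of_mem_erase hj)]
  refine ⟨y, ⟨⟨hyA, fun j hj => (hyz j hj).trans_le (hz.2 j hj)⟩, .of_forall fun ε =>
    ⟨AffineMap.lineMap_mem _ hz.1 hyA, fun j hj => ?_⟩⟩, by rw [hy i hi, Function.update_self]⟩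
  rw [AffineMap.apply_lineMap, hyz j hj, AffineMap.lineMap_same_apply]
  exact hz.2 j hj

lemma JointlySurjective.exists_inner_eq_sum (h : JointlySurjective A s g)
    (x : Euc d) : ∃ z ∈ A, (∀ i ∈ s, g i z = 0) ∧
      ∃ a : ι → ℝ, ∀ y ∈ A, ⟪x - z, y - z⟫ = ∑ i ∈ s, a i * g i y := by
  classical
  obtain ⟨L, hL⟩ : ∃ L : AffineSubspace ℝ (Euc d), ∀ y, y ∈ L ↔ y ∈ A ∧ ∀ i ∈ s, g i y = 0 := by
    refine ⟨A ⊓ sInf ((fun i => hyperplane (g i)) '' s), fun y => ?_⟩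
    rw [AffineSubspace.mem_inf_iff, AffineSubspace.mem_sInf_iff, Set.forall_mem_image]
    exact and_congr_right fun _ => forall₂_congr fun i _ => mem_hyperplane
  obtain ⟨z, hzL, horth⟩ := exists_mem_forall_inner_sub_eq_zero
    (show (L : Set (Euc d)).Nonempty from (h 0).imp fun y hy => (hL y).2 hy) x
  obtain ⟨hz, hgz⟩ := (hL z).1 hzL
  choose w hwA hgw using fun i => h (Pi.single i 1)
  refine ⟨z, hz, hgz, fun i => ⟪x - z, w i - z⟫, fun y hy => ?_⟩
  set v := ∑ i ∈ s, g i y • (w i - z) with hv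
  have hyv : -v +ᵥ y ∈ L := by
    refine (hL _).2 ⟨AffineSubspace.vadd_mem_of_mem_direction (neg_mem (sum_mem fun i _ =>
      Submodule.smul_mem _ _ (AffineSubspace.vsub_mem_direction (hwA i) hz))) hy, fun j hj => ?_⟩
    have hgj (i : ι) : (g j).linear (w i - z) = (Pi.single i 1 : ι → ℝ) j := by
      rw [← vsub_eq_sub, AffineMap.linearMap_vsub, hgw i j hj, hgz j hj, vsub_eq_sub, sub_zero]
    rw [AffineMap.map_vadd, map_neg, hv, map_sum]
    simp [hgj, Pi.single_apply, hj]
  have hyv_orth := horth _ hyv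
  rw [vadd_eq_add, neg_add_eq_sub, sub_right_comm, inner_sub_right, sub_eq_zero] at hyv_orth
  simp only [hyv_orth, hv, inner_sum, inner_smul_right, mul_comm]

lemma lineMap_two_mem_polyhedron (hz : z ∈ A) (hgz : ∀ i ∈ s, g i z = 0) {f : Euc d}
    (hf : f ∈ polyhedron A s g) : AffineMap.lineMap z f (2 : ℝ) ∈ polyhedron A s g :=
  ⟨AffineMap.lineMap_mem _ hz hf.1, fun i hi => by
    rw [apply_lineMap_of_left_eq_zero (hgz i hi)]
    exact mul_nonpos_of_nonneg_of_nonpos zero_le_two (hf.2 i hi)⟩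

lemma phi_polyhedron_eq_zero_of_inner_eq_zero (h : JointlySurjective A s g)
    (hi : i ∈ s) (hz : z ∈ A) (hgz : ∀ i ∈ s, g i z = 0) (hx : ∀ y ∈ A, ⟪x - z, y - z⟫ = 0) :
    phi (polyhedron A s g) x = 0 := by
  classical
  have hQ := convex_polyhedron A (s.erase i) g
  have hsurj (c : ℝ) : ∀ F ∈ faces (polyhedron A (s.erase i) g), ∃ y ∈ F, g i y = c := by
    rw [faces_eq_image_minFace hQ]
    rintro _ ⟨q, hq, rfl⟩
    exact h.exists_mem_minFace_erase hi hq c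
  have hzP : z ∈ polyhedron A s g := ⟨hz, fun i hi => (hgz i hi).le⟩
  rw [← polyhedron_erase_inter_halfspace hi]
  refine phi_inter_halfspace_eq_zero hQ (finite_faces_polyhedron A _ g)
    (fun F hF => (hsurj (-1) F hF).imp fun y hy => ⟨hy.1, hy.2.trans_lt neg_one_lt_zero⟩)
    (fun F hF => (hsurj 1 F hF).imp fun y hy => ⟨hy.1, one_pos.trans_eq hy.2.symm⟩) ?_
  rw [polyhedron_erase_inter_halfspace hi]
  exact fun F hF => faceTerm_of_mem_contacts hF.2.2.subset (mem_contacts_of_inner_eq_zero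
    hF.2.2.subset (mem_of_mem_faces_cone hzP (fun f => lineMap_two_mem_polyhedron hz hgz) hF)
    fun y hy => hx y hy.1)

lemma phi_polyhedron_piecewise_neg_eq_zero [DecidableEq ι] (h : JointlySurjective A s g)
    (hz : z ∈ A) (hgz : ∀ i ∈ s, g i z = 0) {a : ι → ℝ}
    (ha : ∀ y ∈ A, ⟪x - z, y - z⟫ = ∑ i ∈ s, a i * g i y) (hi : i ∈ s) (hai : a i ≠ 0) :
    phi (polyhedron A s ({j ∈ s | a j < 0}.piecewise (-g) g)) x = 0 := by
  have hflip (j : ι) (hj : j ∈ s) (y : Euc d) :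
      ({j ∈ s | a j < 0}.piecewise (-g) g) j y = if a j < 0 then -g j y else g j y := by
    simp [piecewise_neg_apply, hj]
  obtain ⟨w, hwA, hw⟩ := h (-a)
  refine phi_cone_eq_zero_of_inner_neg (z := z) (w := w) ⟨hz, fun j hj => ?_⟩
    (fun f => lineMap_two_mem_polyhedron hz fun j hj => ?_) (fun y hy => ?_)
    ⟨hwA, fun j hj => ?_⟩ ?_
  · simp [hflip j hj, hgz j hj]
  · simp [hflip j hj, hgz j hj]
  · rw [ha y hy.1]
    refine Finset.sum_nonpos fun j hj => ?_
    have hyj := hy.2 j hj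
    rw [hflip j hj] at hyj
    split_ifs at hyj with haj
    · exact mul_nonpos_of_nonpos_of_nonneg haj.le (neg_nonpos.1 hyj)
    · exact mul_nonpos_of_nonneg_of_nonpos (not_lt.1 haj) hyj
  · rw [hflip j hj, hw j hj, Pi.neg_apply]
    split_ifs with haj <;> linarith
  · rw [ha w hwA]
    refine Finset.sum_neg' (fun j hj => ?_) ⟨i, hi, ?_⟩
    · rw [hw j hj, Pi.neg_apply, mul_neg, Left.neg_nonpos_iff]
      exact mul_self_nonneg _
    · rw [hw i hi, Pi.neg_apply, mul_neg, Left.neg_neg_iff]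
      exact mul_self_pos.2 hai

lemma phi_add_phi_inf_hyperplane (h : JointlySurjective A {i} g) (x : Euc d) :
    phi (A : Set (Euc d)) x + phi (A ∩ hyperplane (g i) : Set (Euc d)) x = 0 := by
  have hval (c : ℝ) : ∃ y ∈ A, g i y = c := by simpa using h fun _ => c
  obtain ⟨n, hn, hgn⟩ := hval (-1)
  obtain ⟨p, hp, hgp⟩ := hval 1
  obtain ⟨z, hz, hgz⟩ := hval 0
  have hphi : phi (A ∩ hyperplane (g i) : Set (Euc d)) x =
      (-1) ^ sdim (A ∩ hyperplane (g i) : Set (Euc d)) :=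
    phi_affineSubspace (A := A ⊓ hyperplane (g i)) ⟨z, hz, mem_hyperplane.2 hgz⟩ x
  rw [phi_affineSubspace ⟨z, hz⟩, hphi, sdim_eq_sdim_inter_hyperplane_add_one A.convex hn
      (hgn.trans_lt neg_one_lt_zero) hp (one_pos.trans_eq hgp.symm), pow_succ, mul_neg_one,
    neg_add_cancel]

theorem phi_polyhedron_eq_zero (hs : s.Nonempty) (h : JointlySurjective A s g)
    (x : Euc d) : phi (polyhedron A s g) x = 0 := by
  classical
  induction s using Finset.strongInduction generalizing A g with
  | H s ih =>
    have hflip (g : ι → Euc d →ᵃ[ℝ] ℝ) (i : ι) (hi : i ∈ s) (h : JointlySurjective A s g) :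
        phi (polyhedron A s g) x + phi (polyhedron A s (Function.update g i (-g i))) x = 0 := by
      rw [phi_polyhedron_add_update_neg hi]
      rcases (s.erase i).eq_empty_or_nonempty with he | hne
      · rw [he, polyhedron_inf_hyperplane, polyhedron_empty]
        exact phi_add_phi_inf_hyperplane (h.mono (Finset.singleton_subset_iff.2 hi)) x
      · have hss := Finset.erase_ssubset hi
        rw [ih _ hss hne (h.mono hss.subset), ih _ hss hne (h.inf_hyperplane hi), add_zero]
    obtain ⟨z, hz, hgz, a, ha⟩ := h.exists_inner_eq_sum x
    by_cases ha₀ : ∀ i ∈ s, a i = 0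
    · obtain ⟨i, hi⟩ := hs
      refine phi_polyhedron_eq_zero_of_inner_eq_zero h hi hz hgz fun y hy => ?_
      rw [ha y hy, Finset.sum_eq_zero fun j hj => by rw [ha₀ j hj, zero_mul]]
    · push Not at ha₀
      obtain ⟨i, hi, hai⟩ := ha₀
      refine of_piecewise_neg
        (R := fun g => JointlySurjective A s g → phi (polyhedron A s g) x = 0)
        (fun g j hj hR hg => ?_) (Finset.filter_subset (fun j => a j < 0) s)
        (fun _ => phi_polyhedron_piecewise_neg_eq_zero h hz hgz ha hi hai) h
      simpa [hR (hg.update_neg j)] using hflip g j hj hg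

end SimplicialCone

section Constancy

variable {ι : Type*} {d : ℕ} {A : AffineSubspace ℝ (Euc d)} {s : Finset ι}
  {g : ι → Euc d →ᵃ[ℝ] ℝ}

lemma exists_sum_eq_of_not_jointlySurjective (hA : (A : Set (Euc d)).Nonempty)
    (h : ¬JointlySurjective A s g) :
    ∃ (c : ι → ℝ) (b : ℝ), (∃ i ∈ s, c i ≠ 0) ∧ ∀ z ∈ A, ∑ i ∈ s, c i * g i z = b := by
  classical
  let G : Euc d →ᵃ[ℝ] s → ℝ := AffineMap.pi fun i => g i
  have hproper : (A.map G).direction < ⊤ := by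
    refine lt_top_iff_ne_top.2 fun htop => h fun c => ?_
    rw [AffineSubspace.direction_eq_top_iff_of_nonempty (hA.image G)] at htop
    obtain ⟨z, hz, hzc⟩ := AffineSubspace.mem_map.1
      (htop ▸ AffineSubspace.mem_top ℝ _ (fun i : s => c i) : (fun i : s => c i) ∈ A.map G)
    exact ⟨z, hz, fun i hi => congrFun hzc ⟨i, hi⟩⟩
  obtain ⟨f, hf, hker⟩ := Submodule.exists_le_ker_of_lt_top _ hproper
  obtain ⟨z, hz⟩ := hA
  let c (i : ι) : ℝ := f fun j => if i = j then 1 else 0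
  have hsum (u : s → ℝ) : f u = ∑ i : s, c i * u i := by
    simp only [LinearMap.pi_apply_eq_sum_univ f u, smul_eq_mul, Subtype.ext_iff, mul_comm, c]
  refine ⟨c, f (G z), ?_, fun y hy => ?_⟩
  · by_contra! hc
    exact hf (LinearMap.ext fun u => by simp [hsum, hc])
  · rw [← Finset.sum_coe_sort s, ← sub_eq_zero]
    have hyz := hker (AffineSubspace.vsub_mem_direction (AffineSubspace.mem_map_of_mem G hy)
      (AffineSubspace.mem_map_of_mem G hz))
    rw [LinearMap.mem_ker, vsub_eq_sub, map_sub, hsum (G y)] at hyz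
    exact hyz

/-- Flipping the signs so that all terms of a relation `∑ c i * g i = b ≤ 0` become nonnegative
forces them to vanish. -/
lemma exists_polyhedron_piecewise_neg_subset_hyperplane [DecidableEq ι] (hs : s.Nonempty)
    (h : ¬JointlySurjective A s g) :
    ∃ i ∈ s, ∃ t ⊆ s, polyhedron A s (t.piecewise (-g) g) ⊆
      hyperplane ((t.piecewise (-g) g) i) := by
  rcases (A : Set (Euc d)).eq_empty_or_nonempty with hA | hA
  · obtain ⟨i, hi⟩ := hs
    exact ⟨i, hi, ∅, Finset.empty_subset s, fun z hz => (hA ▸ hz.1 : z ∈ (∅ : Set (Euc d))).elim⟩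
  obtain ⟨c, b, ⟨i, hi, hci⟩, hb, hcb⟩ : ∃ (c : ι → ℝ) (b : ℝ), (∃ i ∈ s, c i ≠ 0) ∧ b ≤ 0 ∧
      ∀ z ∈ A, ∑ i ∈ s, c i * g i z = b := by
    obtain ⟨c, b, hc, hcb⟩ := exists_sum_eq_of_not_jointlySurjective hA h
    rcases le_total b 0 with hb | hb
    · exact ⟨c, b, hc, hb, hcb⟩
    · exact ⟨-c, -b, by simpa using hc, neg_nonpos.2 hb, fun z hz => by simp [hcb z hz]⟩
  refine ⟨i, hi, {j ∈ s | 0 < c j}, Finset.filter_subset _ s, fun z hz => ?_⟩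
  have hterm : ∀ j ∈ s, 0 ≤ c j * g j z := fun j hj => by
    have hzj := hz.2 j hj
    rw [piecewise_neg_apply] at hzj
    split_ifs at hzj with hcj
    · exact mul_nonneg (Finset.mem_filter.1 hcj).2.le (neg_nonpos.1 hzj)
    · exact mul_nonneg_of_nonpos_of_nonpos (by simpa [hj] using hcj) hzj
  have hsum : ∑ j ∈ s, c j * g j z = 0 :=
    ((hcb z hz.1).trans_le hb).antisymm (Finset.sum_nonneg hterm)
  have hgz : g i z = 0 :=
    (mul_eq_zero_iff_left hci).1 ((Finset.sum_eq_zero_iff_of_nonneg hterm).1 hsum i hi)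
  rw [SetLike.mem_coe, mem_hyperplane, piecewise_neg_apply, hgz, neg_zero, ite_self]

theorem phi_polyhedron_eq (A : AffineSubspace ℝ (Euc d)) (s : Finset ι)
    (g : ι → Euc d →ᵃ[ℝ] ℝ) (x y : Euc d) :
    phi (polyhedron A s g) x = phi (polyhedron A s g) y := by
  classical
  induction s using Finset.strongInduction generalizing A g with
  | H s ih =>
    rcases s.eq_empty_or_nonempty with rfl | hs
    · rw [polyhedron_empty]
      rcases (A : Set (Euc d)).eq_empty_or_nonempty with hA | hA
      · rw [hA, phi_empty, phi_empty]
      · rw [phi_affineSubspace hA, phi_affineSubspace hA]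
    by_cases h : JointlySurjective A s g
    · rw [phi_polyhedron_eq_zero hs h, phi_polyhedron_eq_zero hs h]
    obtain ⟨i, hi, t, hts, hsub⟩ := exists_polyhedron_piecewise_neg_subset_hyperplane hs h
    refine of_piecewise_neg (R := fun g => phi (polyhedron A s g) x = phi (polyhedron A s g) y)
      (fun g j hj hflip => ?_) hts ?_
    · have hsum_x := phi_polyhedron_add_update_neg (A := A) (g := g) hj x
      have hsum_y := phi_polyhedron_add_update_neg (A := A) (g := g) hj y
      rw [ih _ (Finset.erase_ssubset hj) A g,
        ih _ (Finset.erase_ssubset hj) (A ⊓ hyperplane (g j)) g, ← hsum_y, hflip] at hsum_x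
      exact add_right_cancel hsum_x
    · rw [polyhedron_eq_of_subset_hyperplane hi hsub]
      exact ih _ (Finset.erase_ssubset hi) _ _

lemma exists_eq_polyhedron {P : Set (Euc d)} (hP : IsPolyhedral P) :
    ∃ (s : Finset (Euc d × ℝ)) (g : Euc d × ℝ → Euc d →ᵃ[ℝ] ℝ), P = polyhedron ⊤ s g := by
  obtain ⟨s, rfl⟩ := hP
  refine ⟨s, fun h => (innerₗ (Euc d) h.1).toAffineMap - AffineMap.const ℝ (Euc d) h.2, ?_⟩
  ext z
  simp [polyhedron]

theorem IsPolyhedral.phi_eq {P : Set (Euc d)} (hP : IsPolyhedral P) (x y : Euc d) :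
    phi P x = phi P y := by
  obtain ⟨s, g, rfl⟩ := exists_eq_polyhedron hP
  exact phi_polyhedron_eq ⊤ s g x y

lemma IsPolyhedral.isClosed {P : Set (Euc d)} (hP : IsPolyhedral P) : IsClosed P := by
  obtain ⟨s, rfl⟩ := hP
  simp only [Set.ofPred_forall]
  exact isClosed_biInter fun h _ => isClosed_le (by fun_prop) continuous_const

end Constancy

section Evaluation

variable {d : ℕ} {P F : Set (Euc d)} {v x z : Euc d}

lemma singleton_mem_faces (hv : v ∈ P) (h : ∀ z ∈ P, z ≠ v → ⟪v - x, z - v⟫ < 0) :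
    {v} ∈ faces P := by
  refine ⟨Set.singleton_nonempty v, convex_singleton v, IsExposed.isExtreme fun _ =>
    ⟨innerSL ℝ (v - x), ?_⟩⟩
  have hle : ∀ z ∈ P, ⟪v - x, z⟫ ≤ ⟪v - x, v⟫ := fun z hz => by
    rcases eq_or_ne z v with rfl | hzv
    · rfl
    · simpa [inner_sub_right] using (h z hz hzv).le
  ext z
  refine ⟨?_, fun ⟨hz, hzmax⟩ => by_contra fun hzv => ?_⟩
  · rintro rfl
    exact ⟨hv, hle⟩
  · have hlt := h z hz hzv
    rw [inner_sub_right] at hlt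
    exact (sub_neg.1 hlt).not_ge (hzmax v hv)

lemma inner_sub_neg_of_inner_sub_neg (h : ⟪z - x, z - v⟫ < 0) : ⟪v - x, z - v⟫ < 0 := by
  have hsplit : ⟪z - x, z - v⟫ = ⟪v - x, z - v⟫ + ⟪z - v, z - v⟫ := by
    rw [← inner_add_left, add_comm, sub_add_sub_cancel]
  linarith [real_inner_self_nonneg (x := z - v)]

lemma eq_singleton_of_nonempty_contacts (hv : v ∈ P) (h : ∀ z ∈ P, z ≠ v → ⟪z - x, z - v⟫ < 0)
    (hF : F ⊆ P) (hne : (contacts F (normalCone P F) x).Nonempty) : F = {v} := by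
  obtain ⟨f, hf, hfx : f - x ∈ normalCone P F⟩ := hne
  have hge : ∀ y ∈ F, 0 ≤ ⟪f - x, y - v⟫ := fun y hy => by
    rw [← neg_sub v y, inner_neg_right]
    exact neg_nonneg.2 (hfx y hy v hv)
  obtain rfl : f = v := by_contra fun hfv => (h f (hF hf) hfv).not_ge (hge f hf)
  exact Set.eq_singleton_iff_unique_mem.2 ⟨hf, fun y hy => by_contra fun hyf =>
    (inner_sub_neg_of_inner_sub_neg (h y (hF hy) hyf)).not_ge (hge y hy)⟩

lemma phi_eq_one_of_inner_neg (hv : v ∈ P) (h : ∀ z ∈ P, z ≠ v → ⟪z - x, z - v⟫ < 0) :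
    phi P x = 1 := by
  have hvx : ∀ z ∈ P, z ≠ v → ⟪v - x, z - v⟫ < 0 := fun z hz hzv =>
    inner_sub_neg_of_inner_sub_neg (h z hz hzv)
  have hcontact : v ∈ contacts {v} (normalCone P {v}) x := by
    refine ⟨rfl, mem_normalCone_singleton.2 fun z hz => ?_⟩
    rcases eq_or_ne z v with rfl | hzv
    · simp
    · exact (hvx z hz hzv).le
  rw [phi_eq_finsum_faceTerm, finsum_mem_def, finsum_eq_single _ {v}]
  · rw [Set.indicator_of_mem (singleton_mem_faces hv hvx),
      faceTerm_of_mem_contacts (Set.singleton_subset_iff.2 hv) hcontact, sdim,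
      direction_affineSpan, vectorSpan_singleton, finrank_bot, pow_zero]
  · intro F hFv
    rw [Set.indicator_apply_eq_zero]
    exact fun hF => faceTerm_of_contacts_eq_empty (Set.not_nonempty_iff_eq_empty.1
      (mt (eq_singleton_of_nonempty_contacts hv h hF.2.2.subset) hFv))

lemma inner_sub_neg_two_smul_neg (hzv : z ≠ v) (h : ‖z‖ ≤ ‖v‖) :
    ⟪z - (-2 : ℝ) • v, z - v⟫ < 0 := by
  have hpos : 0 < ⟪z - v, z - v⟫ := real_inner_self_pos.2 (sub_ne_zero.2 hzv)
  have hnorm : ⟪z, z⟫ ≤ ⟪v, v⟫ := by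
    rw [real_inner_self_eq_norm_sq, real_inner_self_eq_norm_sq]
    gcongr
  simp only [inner_sub_left, inner_sub_right, real_inner_smul_left, real_inner_comm z v] at hpos ⊢
  linarith

end Evaluation

theorem phi_eq_one_of_polytope {d : ℕ} (P : Set (Euc d))
    (hP : IsPolyhedral P) (hne : P.Nonempty) (hb : Bornology.IsBounded P) :
    ∀ x : Euc d, phi P x = 1 := by
  intro x
  have hcompact : IsCompact P := Metric.isCompact_of_isClosed_isBounded hP.isClosed hb
  obtain ⟨v, hv, hmax⟩ := hcompact.exists_isMaxOn hne continuous_norm.continuousOn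
  rw [hP.phi_eq x ((-2 : ℝ) • v)]
  exact phi_eq_one_of_inner_neg hv fun z hz hzv => inner_sub_neg_two_smul_neg hzv (hmax hz)
end
end

section
/- For a polyhedral cone P in ℝ^d that is not a linear subspace, Σ_{F face of P} (-1)^{dim F} = 0, where the sum runs over all nonempty faces of P including P itself. -/
open RealInnerProductSpace Pointwise

noncomputable section

/-- A polyhedral cone: intersection of finitely many closed half-spaces whose
boundary hyperplanes contain the origin. -/
def IsPolyhedralCone {d : ℕ} (P : Set (Euc d)) : Prop :=
  ∃ s : Finset (Euc d), P = {x | ∀ u ∈ s, ⟪u, x⟫ ≤ 0}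

/-!
Cut a polyhedral cone `P` by a central hyperplane arrangement and add up `(-1) ^ dim C` over the
cells `C` contained in `P`. Refining the arrangement does not change this sum: a hyperplane either
leaves a cell intact or cuts it into two cells of the same dimension and one of dimension one less.
For the arrangement of the defining functionals of `P`, the cells are the relative interiors of the
faces, so the sum is the one in question.

If `P` is not a subspace, some `p ∈ P` makes a defining functional negative. If only one functional
is negative at `p`, every cell of the arrangement of the other ones is invariant under translation
by `p`, hence its part in `P` consists of a cell and a facet of it, which cancel. If `a p < 0` and
`b p < 0`, the hyperplane `a p • b = b p • a` cuts `P` into two parts, on each of which one of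
`a ≤ 0` and `b ≤ 0` is redundant, and induction applies.
-/

theorem finrank_inf_ker_add_one {K E : Type*} [Field K] [AddCommGroup E] [Module K E]
    {W : Submodule K E} [FiniteDimensional K W] {φ : Module.Dual K E} {w : E}
    (hw : w ∈ W) (hφ : φ w ≠ 0) :
    Module.finrank K (W ⊓ LinearMap.ker φ : Submodule K E) + 1 = Module.finrank K W := by
  have hrestrict : φ.domRestrict W ≠ 0 := fun h => hφ (LinearMap.congr_fun h ⟨w, hw⟩)
  rw [← Module.Dual.finrank_ker_add_one_of_ne_zero hrestrict, ← Submodule.map_comap_subtype,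
    Submodule.finrank_map_subtype_eq]
  rfl

namespace HyperplaneArrangement

variable {V : Type*} [AddCommGroup V] [Module ℝ V]
  {𝒜 ℬ : Finset (Module.Dual ℝ V)} {f u : Module.Dual ℝ V} {p x y z : V} {X Y : Set V}

/-- The cell through `x` of the central arrangement of hyperplanes `ker f`, `f ∈ 𝒜`: a relatively
open polyhedral cone. -/
def cell (𝒜 : Finset (Module.Dual ℝ V)) (x : V) : Set V :=
  {y | ∀ f ∈ 𝒜, SignType.sign (f y) = SignType.sign (f x)}

/-- The flat of the arrangement `𝒜` through `x`: the intersection of the hyperplanes of `𝒜` that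
contain `x`. -/
def flat (𝒜 : Finset (Module.Dual ℝ V)) (x : V) : Submodule ℝ V :=
  ⨅ f ∈ 𝒜, ⨅ _ : f x = 0, LinearMap.ker f

/-- The property of being a union of cells of the arrangement `𝒜`. -/
def IsCellUnion (𝒜 : Finset (Module.Dual ℝ V)) (X : Set V) : Prop :=
  ∀ x ∈ X, cell 𝒜 x ⊆ X

/-- The combinatorial Euler characteristic (with compact supports) `∑ (-1) ^ dim C` of a set, where
`C` runs over the cells of `𝒜` that meet it. Only unions of cells are of interest. -/
def eulerChar (𝒜 : Finset (Module.Dual ℝ V)) (X : Set V) : ℤ :=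
  ∑ᶠ C ∈ cell 𝒜 '' X, (-1) ^ Module.finrank ℝ (Submodule.span ℝ C)

/-- The polar cone of a finite set of linear functionals. -/
def polarCone (𝒜 : Finset (Module.Dual ℝ V)) : Set V :=
  {x | ∀ f ∈ 𝒜, f x ≤ 0}

section Cells

theorem mem_cell_self (𝒜 : Finset (Module.Dual ℝ V)) (x : V) : x ∈ cell 𝒜 x :=
  fun _ _ => rfl

theorem cell_eq_of_mem (h : y ∈ cell 𝒜 x) : cell 𝒜 y = cell 𝒜 x := by
  ext z
  exact forall₂_congr fun f hf => by rw [h f hf]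

theorem cell_anti (h : 𝒜 ⊆ ℬ) (x : V) : cell ℬ x ⊆ cell 𝒜 x :=
  fun _ hy f hf => hy f (h hf)

theorem finite_image_cell (𝒜 : Finset (Module.Dual ℝ V)) (X : Set V) : (cell 𝒜 '' X).Finite := by
  let ofSigns (s : 𝒜 → SignType) : Set V := {y | ∀ f : 𝒜, SignType.sign (f.1 y) = s f}
  refine (Set.finite_range ofSigns).subset ?_
  rintro _ ⟨x, -, rfl⟩
  exact ⟨fun f => SignType.sign (f.1 x), by ext y; simp [ofSigns, cell]⟩

theorem add_mem_cell (hy : y ∈ cell 𝒜 x) (hz : z ∈ cell 𝒜 x) : y + z ∈ cell 𝒜 x := by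
  intro f hf
  have hyf := hy f hf
  have hzf := hz f hf
  rw [map_add]
  rcases lt_trichotomy (f x) 0 with hx | hx | hx
  · rw [sign_neg hx, sign_eq_neg_one_iff] at hyf hzf ⊢
    exact add_neg hyf hzf
  · rw [hx, sign_zero, sign_eq_zero_iff] at hyf hzf
    rw [hyf, hzf, hx, add_zero]
  · rw [sign_pos hx, sign_eq_one_iff] at hyf hzf ⊢
    exact add_pos hyf hzf

theorem smul_mem_cell {c : ℝ} (hc : 0 < c) (hy : y ∈ cell 𝒜 x) : c • y ∈ cell 𝒜 x := by
  intro f hf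
  rw [map_smul, smul_eq_mul, sign_mul, sign_pos hc, one_mul, hy f hf]

theorem add_smul_mem_cell (hp : ∀ f ∈ 𝒜, f p = 0) (x : V) (c : ℝ) : x + c • p ∈ cell 𝒜 x := by
  intro f hf
  rw [map_add, map_smul, hp f hf, smul_zero, add_zero]

end Cells

section Flats

theorem mem_flat : z ∈ flat 𝒜 x ↔ ∀ f ∈ 𝒜, f x = 0 → f z = 0 := by
  simp [flat]

theorem cell_subset_flat (𝒜 : Finset (Module.Dual ℝ V)) (x : V) : cell 𝒜 x ⊆ flat 𝒜 x := by
  intro y hy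
  refine mem_flat.2 fun f hf hx => ?_
  rw [← sign_eq_zero_iff, hy f hf, hx, sign_zero]

theorem exists_pos_add_smul_mem_cell (hz : z ∈ flat 𝒜 x) :
    ∃ ε : ℝ, 0 < ε ∧ x + ε • z ∈ cell 𝒜 x := by
  have eventually_sign_eq : ∀ f ∈ 𝒜, ∀ᶠ δ in nhds (0 : ℝ),
      SignType.sign (f (x + δ • z)) = SignType.sign (f x) := by
    intro f hf
    rcases eq_or_ne (f x) 0 with hx | hx
    · simp [hx, mem_flat.1 hz f hf hx]
    · have hcont : ContinuousAt (fun δ : ℝ => SignType.sign (f x + δ * f z)) 0 :=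
        ContinuousAt.comp (g := SignType.sign) (continuousAt_sign_of_ne_zero (by simpa using hx))
          (by fun_prop)
      simpa [ContinuousAt, nhds_discrete] using hcont
  have eventually_mem_cell : ∀ᶠ δ in nhds (0 : ℝ), x + δ • z ∈ cell 𝒜 x :=
    (Filter.eventually_all_finset 𝒜).2 eventually_sign_eq
  obtain ⟨ε, hmem, hε⟩ :=
    ((eventually_mem_cell.filter_mono nhdsWithin_le_nhds).and
      (self_mem_nhdsWithin (s := Set.Ioi 0))).exists
  exact ⟨ε, hε, hmem⟩

theorem span_cell (𝒜 : Finset (Module.Dual ℝ V)) (x : V) :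
    Submodule.span ℝ (cell 𝒜 x) = flat 𝒜 x := by
  refine le_antisymm (Submodule.span_le.2 (cell_subset_flat 𝒜 x)) fun z hz => ?_
  obtain ⟨ε, hε, hmem⟩ := exists_pos_add_smul_mem_cell hz
  have hεz : ε • z ∈ Submodule.span ℝ (cell 𝒜 x) := by
    simpa using Submodule.sub_mem _ (Submodule.subset_span hmem)
      (Submodule.subset_span (mem_cell_self 𝒜 x))
  exact (Submodule.smul_mem_iff _ hε.ne').1 hεz

end Flats

section CellUnions

theorem IsCellUnion.mono (hX : IsCellUnion 𝒜 X) (h : 𝒜 ⊆ ℬ) : IsCellUnion ℬ X :=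
  fun x hx => (cell_anti h x).trans (hX x hx)

theorem IsCellUnion.inter (hX : IsCellUnion 𝒜 X) (hY : IsCellUnion 𝒜 Y) :
    IsCellUnion 𝒜 (X ∩ Y) :=
  fun x hx => Set.subset_inter (hX x hx.1) (hY x hx.2)

theorem IsCellUnion.compl (hX : IsCellUnion 𝒜 X) : IsCellUnion 𝒜 Xᶜ :=
  fun x hx y hy hyX => hx (hX y hyX (cell_eq_of_mem hy ▸ mem_cell_self 𝒜 x))

theorem isCellUnion_cell (𝒜 : Finset (Module.Dual ℝ V)) (x : V) : IsCellUnion 𝒜 (cell 𝒜 x) :=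
  fun _ hy => (cell_eq_of_mem hy).subset

theorem isCellUnion_setOf_le_zero (hf : f ∈ 𝒜) : IsCellUnion 𝒜 {x | f x ≤ 0} :=
  fun x hx y hy => by
    rw [Set.mem_ofPred_eq, ← sign_nonpos_iff] at hx ⊢
    rwa [hy f hf]

theorem isCellUnion_polarCone (𝒜 : Finset (Module.Dual ℝ V)) : IsCellUnion 𝒜 (polarCone 𝒜) :=
  fun x hx _ hy f hf => isCellUnion_setOf_le_zero hf x (hx f hf) hy

end CellUnions

section EulerCharacteristic

theorem eulerChar_cell (𝒜 : Finset (Module.Dual ℝ V)) (x : V) :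
    eulerChar 𝒜 (cell 𝒜 x) = (-1) ^ Module.finrank ℝ (Submodule.span ℝ (cell 𝒜 x)) := by
  have himage : cell 𝒜 '' cell 𝒜 x = {cell 𝒜 x} :=
    Set.eq_singleton_iff_unique_mem.2
      ⟨⟨x, mem_cell_self 𝒜 x, rfl⟩, by rintro _ ⟨y, hy, rfl⟩; exact cell_eq_of_mem hy⟩
  rw [eulerChar, himage, finsum_mem_singleton]

theorem eulerChar_union (hX : IsCellUnion 𝒜 X) (hXY : Disjoint X Y) :
    eulerChar 𝒜 (X ∪ Y) = eulerChar 𝒜 X + eulerChar 𝒜 Y := by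
  have hcells : Disjoint (cell 𝒜 '' X) (cell 𝒜 '' Y) := by
    rw [Set.disjoint_left]
    rintro _ ⟨x, hx, rfl⟩ ⟨y, hy, hyx⟩
    exact Set.disjoint_left.1 hXY (hX x hx (hyx ▸ mem_cell_self 𝒜 y)) hy
  rw [eulerChar, Set.image_union,
    finsum_mem_union hcells (finite_image_cell 𝒜 X) (finite_image_cell 𝒜 Y)]
  rfl

theorem eulerChar_eq_finsum_cells (h : 𝒜 ⊆ ℬ) (X : Set V) :
    eulerChar ℬ X = ∑ᶠ C ∈ cell 𝒜 '' X, eulerChar ℬ (X ∩ C) := by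
  have hunion : cell ℬ '' X = ⋃ C ∈ cell 𝒜 '' X, cell ℬ '' (X ∩ C) := by
    rw [← Set.image_iUnion₂, ← Set.inter_iUnion₂]
    congr 1
    exact (Set.inter_eq_left.2 fun x hx =>
      Set.mem_biUnion (Set.mem_image_of_mem (cell 𝒜) hx) (mem_cell_self 𝒜 x)).symm
  have hdisjoint : (cell 𝒜 '' X).PairwiseDisjoint fun C => cell ℬ '' (X ∩ C) := by
    rintro _ ⟨x, -, rfl⟩ _ ⟨y, -, rfl⟩ hne
    refine Set.disjoint_left.2 ?_
    rintro _ ⟨x', ⟨-, hx'⟩, rfl⟩ ⟨y', ⟨-, hy'⟩, heq⟩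
    have hy'x' : y' ∈ cell 𝒜 x' := cell_anti h x' (heq ▸ mem_cell_self ℬ y')
    exact hne (by rw [← cell_eq_of_mem hx', ← cell_eq_of_mem hy', cell_eq_of_mem hy'x'])
  rw [eulerChar, hunion, finsum_mem_biUnion hdisjoint (finite_image_cell 𝒜 X)
    fun _ _ => finite_image_cell ℬ _]
  rfl

end EulerCharacteristic

section CuttingCells

theorem exists_mem_cell_eq_zero (hy : y ∈ cell 𝒜 x) (hz : z ∈ cell 𝒜 x) (hyneg : u y < 0)
    (hzpos : 0 < u z) : ∃ w ∈ cell 𝒜 x, u w = 0 := by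
  refine ⟨u z • y + (-u y) • z,
    add_mem_cell (smul_mem_cell hzpos hy) (smul_mem_cell (neg_pos.2 hyneg) hz), ?_⟩
  simp only [map_add, map_smul, smul_eq_mul]
  ring

theorem exists_mem_cell_neg_and_pos (hx : u x = 0) (hy : y ∈ cell 𝒜 x) (hne : u y ≠ 0) :
    (∃ z ∈ cell 𝒜 x, u z < 0) ∧ ∃ z ∈ cell 𝒜 x, 0 < u z := by
  obtain ⟨ε, hε, hmem⟩ : ∃ ε : ℝ, 0 < ε ∧ x + ε • -y ∈ cell 𝒜 x :=
    exists_pos_add_smul_mem_cell (neg_mem (cell_subset_flat 𝒜 x hy))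
  have hval : u (x + ε • -y) = -(ε * u y) := by simp [hx]
  rcases hne.lt_or_gt with hneg | hpos
  · refine ⟨⟨y, hy, hneg⟩, _, hmem, ?_⟩
    rw [hval]
    exact neg_pos.2 (mul_neg_of_pos_of_neg hε hneg)
  · refine ⟨⟨_, hmem, ?_⟩, y, hy, hpos⟩
    rw [hval]
    exact neg_neg_of_pos (mul_pos hε hpos)

theorem exists_mem_cell_zero_and_neg_and_pos (hy : y ∈ cell 𝒜 x)
    (hne : SignType.sign (u y) ≠ SignType.sign (u x)) :
    ∃ o ∈ cell 𝒜 x, u o = 0 ∧ (∃ z ∈ cell 𝒜 x, u z < 0) ∧ ∃ z ∈ cell 𝒜 x, 0 < u z := by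
  have hx := mem_cell_self 𝒜 x
  obtain ⟨o, ho, hou⟩ : ∃ o ∈ cell 𝒜 x, u o = 0 := by
    rcases lt_trichotomy (u x) 0 with hux | hux | hux
    · rcases lt_trichotomy (u y) 0 with huy | huy | huy
      · exact absurd (by rw [sign_neg huy, sign_neg hux]) hne
      · exact ⟨y, hy, huy⟩
      · exact exists_mem_cell_eq_zero hx hy hux huy
    · exact ⟨x, hx, hux⟩
    · rcases lt_trichotomy (u y) 0 with huy | huy | huy
      · exact exists_mem_cell_eq_zero hy hx huy hux
      · exact ⟨y, hy, huy⟩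
      · exact absurd (by rw [sign_pos huy, sign_pos hux]) hne
  obtain ⟨z, hz, huz⟩ : ∃ z ∈ cell 𝒜 x, u z ≠ 0 := by
    by_contra! hzero
    exact hne (by rw [hzero x hx, hzero y hy])
  have hcell : cell 𝒜 o = cell 𝒜 x := cell_eq_of_mem ho
  exact ⟨o, ho, hou, hcell ▸ exists_mem_cell_neg_and_pos hou (hcell ▸ hz) huz⟩

variable [DecidableEq (Module.Dual ℝ V)]

theorem cell_insert (u : Module.Dual ℝ V) (𝒜 : Finset (Module.Dual ℝ V)) (x : V) :
    cell (insert u 𝒜) x = cell 𝒜 x ∩ {y | SignType.sign (u y) = SignType.sign (u x)} := by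
  ext y
  simp [cell, and_comm]

theorem cell_insert_of_eq_zero (𝒜 : Finset (Module.Dual ℝ V)) (hx : u x = 0) :
    cell (insert u 𝒜) x = cell 𝒜 x ∩ {y | u y = 0} := by
  simp [cell_insert, hx]

theorem cell_insert_of_neg (𝒜 : Finset (Module.Dual ℝ V)) (hx : u x < 0) :
    cell (insert u 𝒜) x = cell 𝒜 x ∩ {y | u y < 0} := by
  simp [cell_insert, sign_neg hx, sign_eq_neg_one_iff]

theorem cell_insert_of_pos (𝒜 : Finset (Module.Dual ℝ V)) (hx : 0 < u x) :
    cell (insert u 𝒜) x = cell 𝒜 x ∩ {y | 0 < u y} := by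
  simp [cell_insert, sign_pos hx, sign_eq_one_iff]

theorem flat_insert_of_eq_zero (𝒜 : Finset (Module.Dual ℝ V)) (hx : u x = 0) :
    flat (insert u 𝒜) x = flat 𝒜 x ⊓ LinearMap.ker u := by
  ext z
  simp [mem_flat, hx, and_comm]

theorem flat_insert_of_ne_zero (𝒜 : Finset (Module.Dual ℝ V)) (hx : u x ≠ 0) :
    flat (insert u 𝒜) x = flat 𝒜 x := by
  ext z
  simp [mem_flat, hx]

variable [FiniteDimensional ℝ V]

theorem eulerChar_cell_inter_halfSpace (hx : u x = 0) (hy : y ∈ cell 𝒜 x) (huy : u y < 0) :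
    eulerChar (insert u 𝒜) (cell 𝒜 x ∩ {z | u z ≤ 0}) = 0 := by
  have hcell : cell 𝒜 y = cell 𝒜 x := cell_eq_of_mem hy
  have hflat : flat 𝒜 y = flat 𝒜 x := by rw [← span_cell, hcell, span_cell]
  have hunion : cell 𝒜 x ∩ {z | u z ≤ 0} = cell (insert u 𝒜) x ∪ cell (insert u 𝒜) y := by
    rw [cell_insert_of_eq_zero 𝒜 hx, cell_insert_of_neg 𝒜 huy, hcell,
      ← Set.inter_union_distrib_left]
    congr 1
    ext z
    exact le_iff_eq_or_lt (a := u z)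
  have hdisjoint : Disjoint (cell (insert u 𝒜) x) (cell (insert u 𝒜) y) := by
    rw [cell_insert_of_eq_zero 𝒜 hx, cell_insert_of_neg 𝒜 huy, Set.disjoint_left]
    exact fun z hzx hzy => hzy.2.ne hzx.2
  rw [hunion, eulerChar_union (isCellUnion_cell _ x) hdisjoint, eulerChar_cell, eulerChar_cell,
    span_cell, span_cell, flat_insert_of_eq_zero 𝒜 hx, flat_insert_of_ne_zero 𝒜 huy.ne, hflat,
    ← finrank_inf_ker_add_one (cell_subset_flat 𝒜 x hy) huy.ne]
  ring

theorem eulerChar_insert_cell (u : Module.Dual ℝ V) (𝒜 : Finset (Module.Dual ℝ V)) (x : V) :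
    eulerChar (insert u 𝒜) (cell 𝒜 x) = eulerChar 𝒜 (cell 𝒜 x) := by
  by_cases hconst : ∀ y ∈ cell 𝒜 x, SignType.sign (u y) = SignType.sign (u x)
  · have hcell : cell (insert u 𝒜) x = cell 𝒜 x := by
      rw [cell_insert]
      exact Set.inter_eq_left.2 hconst
    calc eulerChar (insert u 𝒜) (cell 𝒜 x)
        = eulerChar (insert u 𝒜) (cell (insert u 𝒜) x) := by rw [hcell]
      _ = (-1) ^ Module.finrank ℝ (Submodule.span ℝ (cell 𝒜 x)) := by rw [eulerChar_cell, hcell]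
      _ = eulerChar 𝒜 (cell 𝒜 x) := (eulerChar_cell 𝒜 x).symm
  · push Not at hconst
    obtain ⟨y, hy, hne⟩ := hconst
    obtain ⟨o, ho, hou, ⟨n, hn, hun⟩, q, hq, huq⟩ := exists_mem_cell_zero_and_neg_and_pos hy hne
    have hcello : cell 𝒜 o = cell 𝒜 x := cell_eq_of_mem ho
    have hcellq : cell 𝒜 q = cell 𝒜 x := cell_eq_of_mem hq
    have hunion : cell 𝒜 x = cell (insert u 𝒜) q ∪ (cell 𝒜 x ∩ {z | u z ≤ 0}) := by
      rw [cell_insert_of_pos 𝒜 huq, hcellq, ← Set.inter_union_distrib_left]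
      exact (Set.inter_eq_left.2 fun z _ => lt_or_ge 0 (u z)).symm
    have hdisjoint : Disjoint (cell (insert u 𝒜) q) (cell 𝒜 x ∩ {z | u z ≤ 0}) := by
      rw [cell_insert_of_pos 𝒜 huq, Set.disjoint_left]
      exact fun z hpos hle => not_lt_of_ge (show u z ≤ 0 from hle.2) hpos.2
    have hhalf : eulerChar (insert u 𝒜) (cell 𝒜 x ∩ {z | u z ≤ 0}) = 0 :=
      hcello ▸ eulerChar_cell_inter_halfSpace hou (hcello ▸ hn) hun
    calc eulerChar (insert u 𝒜) (cell 𝒜 x)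
        = eulerChar (insert u 𝒜) (cell (insert u 𝒜) q ∪ (cell 𝒜 x ∩ {z | u z ≤ 0})) := by
          rw [← hunion]
      _ = eulerChar (insert u 𝒜) (cell (insert u 𝒜) q) := by
          rw [eulerChar_union (isCellUnion_cell _ q) hdisjoint, hhalf, add_zero]
      _ = (-1) ^ Module.finrank ℝ (flat 𝒜 q) := by
          rw [eulerChar_cell, span_cell, flat_insert_of_ne_zero 𝒜 huq.ne']
      _ = eulerChar 𝒜 (cell 𝒜 x) := by rw [← span_cell, hcellq, eulerChar_cell]

theorem eulerChar_insert (u : Module.Dual ℝ V) (hX : IsCellUnion 𝒜 X) :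
    eulerChar (insert u 𝒜) X = eulerChar 𝒜 X := by
  rw [eulerChar_eq_finsum_cells (Finset.subset_insert u 𝒜),
    eulerChar_eq_finsum_cells (Finset.Subset.refl 𝒜)]
  refine finsum_mem_congr rfl ?_
  rintro _ ⟨x, hx, rfl⟩
  rw [Set.inter_eq_right.2 (hX x hx), eulerChar_insert_cell]

theorem eulerChar_eq_add_of_cut (u : Module.Dual ℝ V) (hX : IsCellUnion 𝒜 X) :
    eulerChar 𝒜 X = eulerChar (insert u 𝒜) (X ∩ {x | u x ≤ 0}) +
      eulerChar (insert u 𝒜) (X ∩ {x | u x ≤ 0}ᶜ) := by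
  have hhalf : IsCellUnion (insert u 𝒜) (X ∩ {x | u x ≤ 0}) :=
    (hX.mono (Finset.subset_insert u 𝒜)).inter
      (isCellUnion_setOf_le_zero (Finset.mem_insert_self u 𝒜))
  have hdisjoint : Disjoint (X ∩ {x | u x ≤ 0}) (X ∩ {x | u x ≤ 0}ᶜ) :=
    disjoint_compl_right.mono Set.inter_subset_right Set.inter_subset_right
  rw [← eulerChar_union hhalf hdisjoint, Set.inter_union_compl, eulerChar_insert u hX]

end CuttingCells

section PolarCones

variable [DecidableEq (Module.Dual ℝ V)] {𝒢 : Finset (Module.Dual ℝ V)} {K : Set V}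

theorem polarCone_union (𝒜 ℬ : Finset (Module.Dual ℝ V)) :
    polarCone (𝒜 ∪ ℬ) = polarCone 𝒜 ∩ polarCone ℬ := by
  ext x
  simp [polarCone, or_imp, forall_and]

theorem isCellUnion_polarCone_inter (𝒜 : Finset (Module.Dual ℝ V)) (hK : IsCellUnion 𝒢 K) :
    IsCellUnion (𝒜 ∪ 𝒢) (polarCone 𝒜 ∩ K) :=
  ((isCellUnion_polarCone 𝒜).mono Finset.subset_union_left).inter
    (hK.mono Finset.subset_union_right)

variable [FiniteDimensional ℝ V]

theorem eulerChar_halfSpace_inter (hu : u p < 0) (h𝒢 : ∀ g ∈ 𝒢, g p = 0) (hK : IsCellUnion 𝒢 K) :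
    eulerChar (insert u 𝒢) ({x | u x ≤ 0} ∩ K) = 0 := by
  rw [eulerChar_eq_finsum_cells (Finset.subset_insert u 𝒢)]
  refine finsum_mem_eq_zero_of_forall_eq_zero ?_
  rintro _ ⟨x, ⟨-, hxK⟩, rfl⟩
  rw [Set.inter_assoc, Set.inter_eq_right.2 (hK x hxK), Set.inter_comm]
  have hpoint : ∀ r : ℝ, ∃ y ∈ cell 𝒢 x, u y = r := fun r =>
    ⟨x + ((r - u x) / u p) • p, add_smul_mem_cell h𝒢 x _, by
      simp [div_mul_cancel₀ _ hu.ne]⟩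
  obtain ⟨o, ho, huo⟩ := hpoint 0
  obtain ⟨y, hy, huy⟩ := hpoint (-1)
  have hcell : cell 𝒢 o = cell 𝒢 x := cell_eq_of_mem ho
  exact hcell ▸ eulerChar_cell_inter_halfSpace huo (hcell ▸ hy) (huy ▸ neg_one_lt_zero)

theorem eulerChar_polarCone_inter_erase {a b : Module.Dual ℝ V} (ha : a ∈ 𝒜) (hb : b ∈ 𝒜.erase a)
    (hK : IsCellUnion 𝒢 K) (hba : ∀ x ∈ K, b x ≤ 0 → a x ≤ 0) :
    eulerChar (𝒜 ∪ 𝒢) (polarCone 𝒜 ∩ K) =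
      eulerChar (𝒜.erase a ∪ 𝒢) (polarCone (𝒜.erase a) ∩ K) := by
  have hcone : polarCone 𝒜 ∩ K = polarCone (𝒜.erase a) ∩ K := by
    nth_rw 1 [← Finset.insert_erase ha]
    ext x
    refine and_congr_left fun hxK => (Finset.forall_mem_insert ..).trans (and_iff_right_of_imp ?_)
    exact fun hx => hba x hxK (hx b hb)
  rw [hcone, ← eulerChar_insert a (isCellUnion_polarCone_inter _ hK), ← Finset.insert_union,
    Finset.insert_erase ha]

theorem eulerChar_polarCone_inter_eq_zero (h𝒜 : 𝒜.Nonempty) (h𝒜p : ∀ f ∈ 𝒜, f p < 0)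
    (h𝒢 : ∀ g ∈ 𝒢, g p = 0) (hK : IsCellUnion 𝒢 K) :
    eulerChar (𝒜 ∪ 𝒢) (polarCone 𝒜 ∩ K) = 0 := by
  induction 𝒜 using Finset.strongInduction generalizing 𝒢 K with
  | H 𝒜 ih =>
  rcases h𝒜.exists_eq_singleton_or_nontrivial with ⟨u, rfl⟩ | ⟨a, ha, b, hb, hab⟩
  · simpa [polarCone] using eulerChar_halfSpace_inter (h𝒜p u (by simp)) h𝒢 hK
  rw [Finset.mem_coe] at ha hb
  have hap := h𝒜p a ha
  have hbp := h𝒜p b hb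
  -- `g` kills `p`; where `g ≤ 0` the constraint `a ≤ 0` follows from `b ≤ 0`, elsewhere conversely.
  let g : Module.Dual ℝ V := a p • b - b p • a
  have hg (x : V) : g x = a p * b x - b p * a x := rfl
  have h𝒢' : ∀ h ∈ insert g 𝒢, h p = 0 :=
    Finset.forall_mem_insert .. |>.2 ⟨by rw [hg, mul_comm, sub_self], h𝒢⟩
  let S : Set V := {x | g x ≤ 0}
  have hS : IsCellUnion (insert g 𝒢) S := isCellUnion_setOf_le_zero (Finset.mem_insert_self g 𝒢)
  have drop {c d : Module.Dual ℝ V} {L : Set V} (hc : c ∈ 𝒜) (hd : d ∈ 𝒜.erase c)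
      (hL : IsCellUnion (insert g 𝒢) L) (hdc : ∀ x ∈ L, d x ≤ 0 → c x ≤ 0) :
      eulerChar (𝒜 ∪ insert g 𝒢) (polarCone 𝒜 ∩ L) = 0 := by
    rw [eulerChar_polarCone_inter_erase hc hd hL hdc]
    exact ih _ (Finset.erase_ssubset hc) ⟨d, hd⟩
      (fun f hf => h𝒜p f (Finset.mem_of_mem_erase hf)) h𝒢' hL
  have hK' : IsCellUnion (insert g 𝒢) K := hK.mono (Finset.subset_insert g 𝒢)
  have hnonpos : eulerChar (𝒜 ∪ insert g 𝒢) (polarCone 𝒜 ∩ (K ∩ S)) = 0 := by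
    refine drop ha (Finset.mem_erase.2 ⟨hab.symm, hb⟩) (hK'.inter hS) fun x hx hbx => ?_
    have hgx : g x ≤ 0 := hx.2
    rw [hg] at hgx
    nlinarith
  have hpos : eulerChar (𝒜 ∪ insert g 𝒢) (polarCone 𝒜 ∩ (K ∩ Sᶜ)) = 0 := by
    refine drop hb (Finset.mem_erase.2 ⟨hab, ha⟩) (hK'.inter hS.compl) fun x hx hax => ?_
    have hgx : 0 < g x := not_le.1 hx.2
    rw [hg] at hgx
    nlinarith
  rw [eulerChar_eq_add_of_cut g (isCellUnion_polarCone_inter 𝒜 hK), ← Finset.union_insert,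
    Set.inter_assoc, Set.inter_assoc, hnonpos, hpos, add_zero]

end PolarCones

theorem eulerChar_polarCone_eq_zero [FiniteDimensional ℝ V] (hp : p ∈ polarCone 𝒜) (hf : f ∈ 𝒜)
    (hfp : f p < 0) : eulerChar 𝒜 (polarCone 𝒜) = 0 := by
  classical
  let 𝒩 := 𝒜.filter fun h => h p < 0
  let 𝒵 := 𝒜.filter fun h => ¬ h p < 0
  have hunion : 𝒩 ∪ 𝒵 = 𝒜 := Finset.filter_union_filter_not_eq _ 𝒜
  have h𝒩 : ∀ h ∈ 𝒩, h p < 0 := fun h hh => (Finset.mem_filter.1 hh).2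
  have h𝒵 : ∀ h ∈ 𝒵, h p = 0 := fun h hh =>
    have hh := Finset.mem_filter.1 hh
    le_antisymm (hp h hh.1) (not_lt.1 hh.2)
  rw [← hunion, polarCone_union]
  exact eulerChar_polarCone_inter_eq_zero ⟨f, Finset.mem_filter.2 ⟨hf, hfp⟩⟩ h𝒩 h𝒵
    (isCellUnion_polarCone 𝒵)

section Faces

theorem cell_subset_polarCone_inter_flat (hx : x ∈ polarCone 𝒜) :
    cell 𝒜 x ⊆ polarCone 𝒜 ∩ flat 𝒜 x :=
  Set.subset_inter (isCellUnion_polarCone 𝒜 x hx) (cell_subset_flat 𝒜 x)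

theorem cell_eq_of_polarCone_inter_flat_eq (hx : x ∈ polarCone 𝒜) (hy : y ∈ polarCone 𝒜)
    (h : polarCone 𝒜 ∩ flat 𝒜 x = polarCone 𝒜 ∩ (flat 𝒜 y : Set V)) :
    cell 𝒜 x = cell 𝒜 y := by
  have hxy : x ∈ flat 𝒜 y :=
    (h.subset (cell_subset_polarCone_inter_flat hx (mem_cell_self 𝒜 x))).2
  have hyx : y ∈ flat 𝒜 x :=
    (h.superset (cell_subset_polarCone_inter_flat hy (mem_cell_self 𝒜 y))).2
  refine cell_eq_of_mem fun f hf => ?_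
  have hzero : f x = 0 ↔ f y = 0 := ⟨mem_flat.1 hyx f hf, mem_flat.1 hxy f hf⟩
  rcases (hx f hf).lt_or_eq with hfx | hfx
  · rw [sign_neg hfx, sign_neg ((hy f hf).lt_of_ne (mt hzero.2 hfx.ne))]
  · rw [hfx, hzero.1 hfx]

theorem convex_polarCone (𝒜 : Finset (Module.Dual ℝ V)) : Convex ℝ (polarCone 𝒜) := by
  simp only [polarCone, Set.ofPred_forall]
  exact convex_iInter₂ fun f _ => convex_halfSpace_le f.isLinear 0

theorem isExtreme_polarCone_inter_flat (𝒜 : Finset (Module.Dual ℝ V)) (x : V) :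
    IsExtreme ℝ (polarCone 𝒜) (polarCone 𝒜 ∩ flat 𝒜 x) := by
  refine ⟨Set.inter_subset_left, ?_⟩
  rintro y hy z hz _ ⟨-, hw⟩ ⟨a, b, ha, hb, -, rfl⟩
  refine ⟨hy, mem_flat.2 fun f hf hfx => ?_⟩
  have hsum : a * f y + b * f z = 0 := by simpa using mem_flat.1 hw f hf hfx
  have hay : a * f y ≤ 0 := mul_nonpos_of_nonneg_of_nonpos ha.le (hy f hf)
  have hbz : b * f z ≤ 0 := mul_nonpos_of_nonneg_of_nonpos hb.le (hz f hf)
  exact (mul_eq_zero.1 (by linarith : a * f y = 0)).resolve_left ha.ne'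

theorem exists_mem_subset_flat {F : Set V} (hF : F ⊆ polarCone 𝒜) (hne : F.Nonempty)
    (hconv : Convex ℝ F) : ∃ x ∈ F, F ⊆ flat 𝒜 x := by
  classical
  let active (y : V) : Finset (Module.Dual ℝ V) := 𝒜.filter fun f => f y = 0
  obtain ⟨x, hx, hmin⟩ := exists_minimalFor_of_wellFoundedLT (· ∈ F) active hne
  refine ⟨x, hx, fun y hy => mem_flat.2 fun f hf hfx => ?_⟩
  -- The midpoint `m` lies on no more hyperplanes than `x`, so by minimality on the same ones.
  let m : V := (1 / 2 : ℝ) • x + (1 / 2 : ℝ) • y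
  have hm : m ∈ F := hconv hx hy (by norm_num) (by norm_num) (by norm_num)
  have hval (h : Module.Dual ℝ V) : h m = 1 / 2 * h x + 1 / 2 * h y := by simp [m]
  have hle : active m ⊆ active x := by
    intro h hh
    obtain ⟨hh𝒜, hhm⟩ := Finset.mem_filter.1 hh
    rw [hval] at hhm
    refine Finset.mem_filter.2 ⟨hh𝒜, ?_⟩
    linarith [hF hx h hh𝒜, hF hy h hh𝒜]
  have hfm : f m = 0 := (Finset.mem_filter.1 (hmin hm hle (Finset.mem_filter.2 ⟨hf, hfx⟩))).2
  rw [hval, hfx] at hfm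
  linarith

theorem polarCone_inter_flat_subset {F : Set V} (hF : IsExtreme ℝ (polarCone 𝒜) F) (hx : x ∈ F) :
    polarCone 𝒜 ∩ flat 𝒜 x ⊆ F := by
  rintro y ⟨hy, hyflat⟩
  have hxflat : x ∈ flat 𝒜 x := cell_subset_flat 𝒜 x (mem_cell_self 𝒜 x)
  obtain ⟨ε, hε, hmem⟩ := exists_pos_add_smul_mem_cell (sub_mem hxflat hyflat)
  have hbeyond : x + ε • (x - y) ∈ polarCone 𝒜 := isCellUnion_polarCone 𝒜 x (hF.subset hx) hmem
  refine hF.left_mem_of_mem_openSegment hy hbeyond hx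
    ⟨ε / (1 + ε), 1 / (1 + ε), by positivity, by positivity, by field_simp; ring, ?_⟩
  match_scalars
  · field_simp
    ring
  · field_simp

variable {d : ℕ} {𝒜 : Finset (Module.Dual ℝ (Euc d))}

theorem isFaceOf_polarCone_iff {F : Set (Euc d)} :
    IsFaceOf (polarCone 𝒜) F ↔ ∃ x ∈ polarCone 𝒜, F = polarCone 𝒜 ∩ flat 𝒜 x := by
  constructor
  · rintro ⟨hne, hconv, hext⟩
    obtain ⟨x, hx, hflat⟩ := exists_mem_subset_flat hext.subset hne hconv
    exact ⟨x, hext.subset hx, (Set.subset_inter hext.subset hflat).antisymm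
      (polarCone_inter_flat_subset hext hx)⟩
  · rintro ⟨x, hx, rfl⟩
    exact ⟨⟨x, cell_subset_polarCone_inter_flat hx (mem_cell_self 𝒜 x)⟩,
      (convex_polarCone 𝒜).inter (flat 𝒜 x).convex, isExtreme_polarCone_inter_flat 𝒜 x⟩

theorem sdim_eq_finrank_span {F : Set (Euc d)} (h : 0 ∈ F) :
    sdim F = Module.finrank ℝ (Submodule.span ℝ F) := by
  have hspan : vectorSpan ℝ F = Submodule.span ℝ F := by
    simp [vectorSpan_eq_span_vsub_set_right ℝ h]
  rw [sdim, direction_affineSpan, hspan]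

theorem sdim_polarCone_inter_flat {x : Euc d} (hx : x ∈ polarCone 𝒜) :
    sdim (polarCone 𝒜 ∩ flat 𝒜 x) = Module.finrank ℝ (flat 𝒜 x) := by
  have hspan : Submodule.span ℝ (polarCone 𝒜 ∩ flat 𝒜 x) = flat 𝒜 x :=
    (Submodule.span_le.2 Set.inter_subset_right).antisymm
      ((span_cell 𝒜 x).symm.le.trans (Submodule.span_mono (cell_subset_polarCone_inter_flat hx)))
  have hzero : (0 : Euc d) ∈ polarCone 𝒜 ∩ flat 𝒜 x := ⟨by simp [polarCone], zero_mem _⟩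
  rw [sdim_eq_finrank_span hzero, hspan]

theorem finsum_faces_polarCone (𝒜 : Finset (Module.Dual ℝ (Euc d))) :
    ∑ᶠ F ∈ {F : Set (Euc d) | IsFaceOf (polarCone 𝒜) F}, (-1 : ℤ) ^ sdim F =
      eulerChar 𝒜 (polarCone 𝒜) := by
  let face (C : Set (Euc d)) : Set (Euc d) := polarCone 𝒜 ∩ Submodule.span ℝ C
  have hface (x : Euc d) : face (cell 𝒜 x) = polarCone 𝒜 ∩ flat 𝒜 x := by
    simp only [face, span_cell]
  have hbij : Set.BijOn face (cell 𝒜 '' polarCone 𝒜) {F | IsFaceOf (polarCone 𝒜) F} := by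
    refine ⟨?_, ?_, ?_⟩
    · rintro _ ⟨x, hx, rfl⟩
      exact isFaceOf_polarCone_iff.2 ⟨x, hx, hface x⟩
    · rintro _ ⟨x, hx, rfl⟩ _ ⟨y, hy, rfl⟩ h
      rw [hface, hface] at h
      exact cell_eq_of_polarCone_inter_flat_eq hx hy h
    · intro F hF
      obtain ⟨x, hx, rfl⟩ := isFaceOf_polarCone_iff.1 hF
      exact ⟨cell 𝒜 x, ⟨x, hx, rfl⟩, hface x⟩
  refine (finsum_mem_eq_of_bijOn face hbij ?_).symm
  rintro _ ⟨x, hx, rfl⟩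
  rw [hface, sdim_polarCone_inter_flat hx, span_cell]

end Faces

theorem exists_neg_of_polarCone_ne_submodule
    (h : ¬ ∃ U : Submodule ℝ V, polarCone 𝒜 = (U : Set V)) :
    ∃ p ∈ polarCone 𝒜, ∃ f ∈ 𝒜, f p < 0 := by
  by_contra! hnonneg
  refine h ⟨flat 𝒜 0, Set.Subset.antisymm (fun x hx => ?_) fun x hx f hf => ?_⟩
  · exact mem_flat.2 fun f hf _ => le_antisymm (hx f hf) (hnonneg x hx f hf)
  · exact (mem_flat.1 hx f hf (map_zero f)).le

end HyperplaneArrangement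

theorem IsPolyhedralCone.exists_eq_polarCone {d : ℕ} {P : Set (Euc d)}
    (hP : IsPolyhedralCone P) :
    ∃ 𝒜 : Finset (Module.Dual ℝ (Euc d)), P = HyperplaneArrangement.polarCone 𝒜 := by
  classical
  obtain ⟨s, rfl⟩ := hP
  refine ⟨s.image fun u => innerₛₗ ℝ u, ?_⟩
  ext x
  simp [HyperplaneArrangement.polarCone]

theorem euler_relation_cones {d : ℕ} (P : Set (Euc d)) (hP : IsPolyhedralCone P)
    (hns : ¬ ∃ U : Submodule ℝ (Euc d), P = (U : Set (Euc d))) :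
    ∑ᶠ F ∈ {F : Set (Euc d) | IsFaceOf P F}, (-1 : ℤ) ^ sdim F = 0 := by
  obtain ⟨𝒜, rfl⟩ := hP.exists_eq_polarCone
  obtain ⟨p, hp, f, hf, hfp⟩ :=
    HyperplaneArrangement.exists_neg_of_polarCone_ne_submodule hns
  rw [HyperplaneArrangement.finsum_faces_polarCone]
  exact HyperplaneArrangement.eulerChar_polarCone_eq_zero hp hf hfp
end
end
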